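/- arXiv:2510.11338 — 3 statements merged into one kernel-verified Lean document; each statement's English description precedes it below -/
import Mathlib

section
/- Define t_n(x) = Σ_{k=0}^n C(n,k)*C(x,k)*C(x+k,k)*2^k with x = −1/2 in Z_p. For any odd prime p, Σ_{n=0}^{p-1} (8n+5)·t_n(−1/2)^2 ≡ 2p (mod p^2). -/
/-- Generalized binomial coefficient `C(x, k) = x(x-1)⋯(x-k+1)/k!` in `ℚ_[p]`. -/
noncomputable def gbinom {p : ℕ} [Fact p.Prime] (x : ℚ_[p]) (k : ℕ) : ℚ_[p] :=
  (∏ i ∈ Finset.range k, (x - i)) / (k.factorial : ℚ_[p])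

/-- The sequence `t_n(x) = ∑_{k=0}^n C(n,k) C(x,k) C(x+k,k) 2^k`. -/
noncomputable def tseq {p : ℕ} [Fact p.Prime] (x : ℚ_[p]) (n : ℕ) : ℚ_[p] :=
  ∑ k ∈ Finset.range (n+1), (n.choose k : ℚ_[p]) * gbinom x k * gbinom (x + (k : ℚ_[p])) k * 2^k

open Finset intervalIntegral

namespace S17

noncomputable def bet (j k : ℕ) : ℚ := (j.factorial * k.factorial : ℚ) / ((j + k + 1).factorial : ℚ)

lemma bet_zero (k : ℕ) : bet 0 k = 1 / (k + 1) := by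
  unfold bet
  rw [show 0 + k + 1 = k + 1 by ring, Nat.factorial_succ]
  have : (k.factorial : ℚ) ≠ 0 := by positivity
  push_cast
  field_simp
  simp

lemma bet_rec (j k : ℕ) : bet (j + 1) k = bet j k - bet j (k + 1) := by
  unfold bet
  rw [show j + 1 + k + 1 = j + k + 1 + 1 by ring, show j + (k + 1) + 1 = j + k + 1 + 1 by ring,
    Nat.factorial_succ (j + k + 1), Nat.factorial_succ j, Nat.factorial_succ k]
  have : ((j + k + 1).factorial : ℚ) ≠ 0 := by positivity
  push_cast
  field_simp
  ring

lemma integral_bet (j k : ℕ) : ∫ u in (0:ℝ)..1, u ^ j * (1 - u) ^ k = (bet j k : ℝ) := by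
  induction j generalizing k with
  | zero =>
    rw [bet_zero]
    have := integral_comp_sub_left (a := 0) (b := 1) (fun x : ℝ => x ^ k) 1
    simp only [pow_zero, one_mul]
    rw [this]
    simp
  | succ j ih =>
    rw [bet_rec]
    push_cast
    rw [← ih k, ← ih (k + 1), ← integral_sub]
    · congr 1
      ext u
      ring
    · exact Continuous.intervalIntegrable (by fun_prop) _ _
    · exact Continuous.intervalIntegrable (by fun_prop) _ _

lemma alt_sum_poly (P : Polynomial ℝ) (n : ℕ) (hP : P.natDegree < n) :
    ∑ k ∈ range (n + 1), (-1 : ℝ) ^ k * (n.choose k) * P.eval (k : ℝ) = 0 := by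
  have h := congrFun (Polynomial.fwdDiff_iter_eq_zero_of_degree_lt hP) 0
  rw [fwdDiff_iter_eq_sum_shift] at h
  have h2 : (-1 : ℝ) ^ n * (∑ k ∈ range (n + 1), (-1 : ℝ) ^ k * (n.choose k) * P.eval (k : ℝ)) = 0 := by
    rw [← Pi.zero_apply (M := fun _ : ℝ => ℝ) 0, ← h, mul_sum]
    apply sum_congr rfl
    intro k hk
    have hk' : k ≤ n := by simpa [Nat.lt_succ_iff] using hk
    obtain ⟨m, rfl⟩ := Nat.exists_eq_add_of_le hk'
    simp only [zsmul_eq_mul, Nat.add_sub_cancel_left]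
    push_cast
    have e : ((-1 : ℝ) ^ k) * (-1) ^ k = 1 := by rw [← mul_pow]; simp
    rw [pow_add]
    simp
    linear_combination ((-1 : ℝ) ^ m * ((k + m).choose k) * P.eval (k : ℝ)) * e
  have : (-1 : ℝ) ^ n ≠ 0 := by positivity
  exact (mul_eq_zero.mp h2).resolve_left this

lemma alt_sum_inv (h : ℕ) (x : ℝ) (hx : 0 < x) :
    ∑ k ∈ range (h + 1), (-1 : ℝ) ^ k * (h.choose k) / (k + x)
      = h.factorial / ∏ i ∈ range (h + 1), (x + i) := by
  induction h generalizing x with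
  | zero => simp
  | succ h ih =>
    have key : ∑ k ∈ range (h + 1 + 1), (-1 : ℝ) ^ k * ((h + 1).choose k) / (k + x)
      = ∑ k ∈ range (h + 1), (-1 : ℝ) ^ k * (h.choose k) / (k + x)
       - ∑ k ∈ range (h + 1), (-1 : ℝ) ^ k * (h.choose k) / (k + (x + 1)) := by
      rw [sum_range_succ']
      have e1 : ∑ k ∈ range (h + 1), (-1 : ℝ) ^ k * (h.choose k) / (k + x)
        = ∑ k ∈ range (h + 1 + 1), (-1 : ℝ) ^ k * (h.choose k) / (k + x) := by
        rw [sum_range_succ _ (h + 1)]; simp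
      rw [e1, sum_range_succ' _ (h + 1), add_sub_right_comm, ← sum_sub_distrib]
      congr 1
      · apply sum_congr rfl
        intro k _
        rw [Nat.choose_succ_succ]
        have : (k : ℝ) + (x + 1) ≠ 0 := by positivity
        have e : ((k + 1 : ℕ) : ℝ) + x = k + (x + 1) := by push_cast; ring
        rw [e]
        push_cast
        field_simp
        ring
      · simp
    rw [key, ih x hx, ih (x + 1) (by linarith)]
    have e2 : ∏ i ∈ range (h + 1), (x + i) = x * ∏ i ∈ range h, (x + 1 + i) := by
      rw [prod_range_succ']
      rw [mul_comm]
      congr 1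
      · simp
      · apply prod_congr rfl
        intro i _
        push_cast
        ring
    have e3 : ∏ i ∈ range (h + 1), (x + 1 + (i : ℝ)) = (∏ i ∈ range h, (x + 1 + i)) * (x + 1 + h) :=
      prod_range_succ _ _
    have e4 : ∏ i ∈ range (h + 1 + 1), (x + (i : ℝ)) = x * (∏ i ∈ range h, (x + 1 + i)) * (x + 1 + h) := by
      rw [prod_range_succ, e2]; push_cast; ring
    rw [e2, e3, e4, Nat.factorial_succ]
    have : ∏ i ∈ range h, (x + 1 + (i : ℝ)) ≠ 0 := by
      apply ne_of_gt; apply prod_pos; intro i _; positivity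
    push_cast
    have : x + 1 + (h : ℝ) ≠ 0 := by positivity
    field_simp
    ring

lemma choose_prod (h k : ℕ) :
    ((h + k).choose k : ℝ) = (∏ i ∈ range h, ((k : ℝ) + (i + 1))) / h.factorial := by
  induction h with
  | zero => simp
  | succ h ih =>
    rw [prod_range_succ, Nat.factorial_succ]
    have h1 : ((h + 1 + k).choose k : ℝ) * (h + 1) = (h + k).choose k * (k + (h + 1)) := by
      have := Nat.choose_mul_succ_eq (h + k) k
      rw [show h + k + 1 - k = h + 1 by omega, show h + k + 1 = h + 1 + k by ring] at this
      have := congrArg (Nat.cast : ℕ → ℝ) this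
      push_cast at this
      linarith
    have : (h.factorial : ℝ) ≠ 0 := by positivity
    rw [ih] at h1
    push_cast
    field_simp at h1 ⊢
    linarith

noncomputable def lg (h k : ℕ) : ℝ := (-1) ^ k * (h.choose k) * ((h + k).choose k)

lemma moment (h m : ℕ) :
    ∑ k ∈ range (h + 1), lg h k / (k + m + 1)
      = (∏ i ∈ range h, ((i : ℝ) - m)) / ∏ i ∈ range (h + 1), ((m : ℝ) + 1 + i) := by
  set q : Polynomial ℝ := ∏ i ∈ range h, (Polynomial.X + Polynomial.C ((i : ℝ) + 1)) with hq
  set x : ℝ := m + 1 with hx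
  have hx0 : 0 < x := by positivity
  have hdvd : (Polynomial.X - Polynomial.C (-x)) ∣ q - Polynomial.C (q.eval (-x)) :=
    Polynomial.X_sub_C_dvd_sub_C_eval
  obtain ⟨r, hr⟩ := hdvd
  have hqd : q.natDegree ≤ h := by
    rw [hq]
    refine (Polynomial.natDegree_prod_le _ _).trans ?_
    simp only [Polynomial.natDegree_X_add_C]
    simp
  have hfac : (h.factorial : ℝ) ≠ 0 := by positivity
  have hsum : ∑ k ∈ range (h + 1), (-1 : ℝ) ^ k * (h.choose k) * r.eval (k : ℝ) = 0 := by
    rcases eq_or_ne r 0 with h0 | h0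
    · simp [h0]
    apply alt_sum_poly
    have h1 : (q - Polynomial.C (q.eval (-x))).natDegree = 1 + r.natDegree := by
      rw [hr, Polynomial.natDegree_mul (Polynomial.X_sub_C_ne_zero _) h0,
        Polynomial.natDegree_X_sub_C]
    rw [Polynomial.natDegree_sub_C] at h1
    omega
  have hqk : ∀ k : ℕ, ((h + k).choose k : ℝ) = q.eval (k : ℝ) / h.factorial := by
    intro k
    rw [choose_prod, hq, Polynomial.eval_prod]
    simp
  have hqx : q.eval (-x) = ∏ i ∈ range h, ((i : ℝ) - m) := by
    rw [hq, Polynomial.eval_prod]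
    apply prod_congr rfl
    intro i _
    simp [hx]
    ring
  have hqr : ∀ k : ℕ, q.eval (k : ℝ) = q.eval (-x) + (k + x) * r.eval (k : ℝ) := by
    intro k
    have := congrArg (Polynomial.eval (k : ℝ)) hr
    simp only [Polynomial.eval_sub, Polynomial.eval_mul, Polynomial.eval_X, Polynomial.eval_C] at this
    linarith
  have : ∑ k ∈ range (h + 1), lg h k / (k + m + 1)
     = q.eval (-x) / h.factorial * (∑ k ∈ range (h + 1), (-1 : ℝ) ^ k * (h.choose k) / (k + x))
      + 1 / h.factorial * ∑ k ∈ range (h + 1), (-1 : ℝ) ^ k * (h.choose k) * r.eval (k : ℝ) := by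
    rw [mul_sum, mul_sum, ← sum_add_distrib]
    apply sum_congr rfl
    intro k _
    unfold lg
    rw [hqk, hqr, add_assoc, ← hx]
    have : (k : ℝ) + x ≠ 0 := by positivity
    field_simp
  rw [this, hsum, alt_sum_inv h x hx0, hqx]
  field_simp
  ring

/-- Legendre polynomial `P_h(1-4u)`. -/
noncomputable def pl (h : ℕ) (u : ℝ) : ℝ := ∑ k ∈ range (h + 1), lg h k * 2 ^ k * u ^ k

lemma pl_zero (h : ℕ) : pl h 0 = 1 := by
  unfold pl
  rw [sum_range_succ']
  simp [lg]

lemma pl_half (h : ℕ) : pl h (1 / 2) = (-1) ^ h := by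
  have e : ∀ u, pl h u = Polynomial.aeval (2 * u) (Polynomial.shiftedLegendre h) := by
    intro u
    unfold pl
    rw [Polynomial.aeval_eq_sum_range, Polynomial.natDegree_shiftedLegendre]
    apply sum_congr rfl
    intro k _
    rw [Polynomial.coeff_shiftedLegendre, lg, Nat.choose_symm_add (a := h) (b := k)]
    simp [mul_pow]
    ring
  have := Polynomial.shiftedLegendre_eval_symm h (0 : ℝ)
  rw [e]
  have h0 := e 0
  rw [pl_zero] at h0
  simp at this h0 ⊢
  rw [← h0] at this
  have e : ((-1 : ℝ) ^ h) * (-1) ^ h = 1 := by rw [← mul_pow]; simp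
  linear_combination (-(-1 : ℝ) ^ h) * this - (Polynomial.aeval (1:ℝ)) (Polynomial.shiftedLegendre h) * e

@[fun_prop] lemma pl_cont (h : ℕ) : Continuous (pl h) := by
  unfold pl; fun_prop

lemma pl_moment (h m : ℕ) : ∫ u in (0:ℝ)..(1/2), pl h u * u ^ m
    = (1 / 2) ^ (m + 1) * ((∏ i ∈ range h, ((i : ℝ) - m)) / ∏ i ∈ range (h + 1), ((m : ℝ) + 1 + i)) := by
  rw [← moment, mul_sum]
  unfold pl
  simp_rw [sum_mul]
  rw [integral_finsetSum]
  · apply sum_congr rfl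
    intro k _
    have : ∀ u : ℝ, lg h k * 2 ^ k * u ^ k * u ^ m = lg h k * 2 ^ k * u ^ (k + m) := by
      intro u; ring
    simp_rw [this]
    rw [integral_const_mul, integral_pow]
    have h1 : (k : ℝ) + m + 1 ≠ 0 := by positivity
    push_cast
    rw [show k + m + 1 = k + (m + 1) by ring, pow_add]
    have h2 : (2 : ℝ) ^ k * (1 / 2) ^ k = 1 := by rw [← mul_pow]; norm_num
    rw [zero_pow (by omega)]
    field_simp
    linear_combination (lg h k * (1 / 2) ^ (m + 1)) * h2
  · intro i _
    exact Continuous.intervalIntegrable (by fun_prop) _ _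


lemma prod_fac (m n : ℕ) : (∏ i ∈ range n, ((m : ℝ) + 1 + i)) * m.factorial = (m + n).factorial := by
  induction n with
  | zero => simp
  | succ n ih =>
    rw [prod_range_succ, ← add_assoc, Nat.factorial_succ]
    push_cast
    rw [← ih]
    ring

lemma prod_neg0 (m h : ℕ) (hm : m < h) : ∏ i ∈ range h, ((i : ℝ) - m) = 0 :=
  prod_eq_zero (mem_range.mpr hm) (by simp)

lemma prod_neg1 (h d : ℕ) : (∏ i ∈ range h, ((i : ℝ) - (h + d : ℕ))) * d.factorial
    = (-1) ^ h * (h + d).factorial := by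
  have : ∏ i ∈ range h, ((i : ℝ) - (h + d : ℕ)) = (-1) ^ h * ∏ i ∈ range h, ((d : ℝ) + 1 + i) := by
    rw [← prod_range_reflect]
    rw [← card_range h, ← prod_const, card_range, ← prod_mul_distrib]
    apply prod_congr rfl
    intro i hi
    have : i + 1 ≤ h := mem_range.mp hi
    rw [show h - 1 - i = h - (i + 1) by omega, Nat.cast_sub this]
    push_cast
    ring
  rw [this, mul_assoc, prod_fac, add_comm d h]

noncomputable def M (h m : ℕ) : ℝ := ∫ u in (0:ℝ)..(1/2), pl h u * u ^ m

lemma M_lt (h m : ℕ) (hm : m < h) : M h m = 0 := by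
  rw [M, pl_moment, prod_neg0 _ _ hm]; simp

lemma M_self (h : ℕ) : lg h h * 2 ^ h * M h h = 1 / (2 * (2 * h + 1)) := by
  rw [M, pl_moment]
  have h1 := prod_neg1 h 0
  have h2 := prod_fac h (h + 1)
  have h3 : ((h + h).choose h : ℝ) * (h.factorial * h.factorial) = (h + h).factorial := by
    have := Nat.add_choose_mul_factorial_mul_factorial h h
    rw [← this]; push_cast; ring
  rw [← add_assoc, Nat.factorial_succ] at h2
  simp only [add_zero, Nat.factorial_zero, Nat.cast_one, mul_one] at h1
  rw [h1, lg, Nat.choose_self]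
  have hf : (h.factorial : ℝ) ≠ 0 := by positivity
  have hp : ∏ i ∈ range (h + 1), ((h : ℝ) + 1 + i) ≠ 0 := by
    apply ne_of_gt; apply prod_pos; intro i _; positivity
  push_cast at h2
  rw [← h3] at h2
  have h4 : ∏ i ∈ range (h + 1), ((h : ℝ) + 1 + i) = (h + h + 1) * ((h + h).choose h * h.factorial) := by
    apply mul_right_cancel₀ hf
    rw [h2]; ring
  rw [h4]
  have hc : ((h + h).choose h : ℝ) ≠ 0 := by
    have := Nat.choose_pos (show h ≤ h + h by omega)
    positivity
  have e : ((-1 : ℝ) ^ h) * (-1) ^ h = 1 := by rw [← mul_pow]; simp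
  have e2 : (2 : ℝ) ^ h * (1 / 2) ^ h = 1 := by rw [← mul_pow]; norm_num
  have h5 : (2 : ℝ) * h + 1 ≠ 0 := by positivity
  have h6 : (h : ℝ) + h + 1 ≠ 0 := by positivity
  rw [pow_succ]
  field_simp
  have e3 : ((-1 : ℝ) ^ h) ^ 2 = 1 := by rw [sq, e]
  rw [e3]
  linear_combination (2 * (h : ℝ) + 1) * e2

lemma M_succ (h : ℕ) : M h (h + 1) = (h + 1) / 4 * M h h := by
  rw [M, M, pl_moment, pl_moment]
  have h1 := prod_neg1 h 0
  have h1' := prod_neg1 h 1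
  have h2 := prod_fac h (h + 1)
  have h2' := prod_fac (h + 1) (h + 1)
  have h3 : ((h + 1 + (h + 1)).factorial : ℝ) = (2 * h + 2) * (h + (h + 1)).factorial := by
    rw [show h + 1 + (h + 1) = (h + (h + 1)) + 1 by ring, Nat.factorial_succ]
    push_cast; ring
  simp only [add_zero, Nat.factorial_zero, Nat.factorial_one, Nat.cast_one, mul_one] at h1 h1'
  rw [h1, h1']
  rw [h3, ← h2, Nat.factorial_succ] at h2'
  rw [Nat.factorial_succ]
  have hf : (h.factorial : ℝ) ≠ 0 := by positivity
  have hp : ∏ i ∈ range (h + 1), ((h : ℝ) + 1 + i) ≠ 0 := by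
    apply ne_of_gt; apply prod_pos; intro i _; positivity
  have hh : (h : ℝ) + 1 ≠ 0 := by positivity
  have h4 : ∏ i ∈ range (h + 1), (((h + 1 : ℕ) : ℝ) + 1 + i) = 2 * ∏ i ∈ range (h + 1), ((h : ℝ) + 1 + i) := by
    apply mul_right_cancel₀ (mul_ne_zero hh hf)
    push_cast at h2' ⊢
    rw [h2']; ring
  rw [h4]
  push_cast
  field_simp
  ring

noncomputable def J (h m : ℕ) : ℝ := ∫ u in (0:ℝ)..(1/2), pl h u * (1 - u) ^ m

lemma J_eq (h m : ℕ) : J h m = ∑ i ∈ range (m + 1), (-1) ^ i * (m.choose i) * M h i := by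
  unfold J M
  have : ∀ u : ℝ, pl h u * (1 - u) ^ m
      = ∑ i ∈ range (m + 1), ((-1) ^ i * (m.choose i)) * (pl h u * u ^ i) := by
    intro u
    rw [sub_eq_neg_add, add_pow, mul_sum]
    apply sum_congr rfl
    intro i _
    rw [neg_pow u]
    ring
  simp_rw [this]
  rw [integral_finsetSum]
  · simp_rw [integral_const_mul]
  · intro i _
    exact Continuous.intervalIntegrable (by fun_prop) _ _

lemma J_lt (h m : ℕ) (hm : m < h) : J h m = 0 := by
  rw [J_eq]
  apply sum_eq_zero
  intro i hi
  rw [M_lt h i (by have := mem_range.mp hi; omega)]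
  simp

lemma J_self (h : ℕ) : J h h = (-1) ^ h * M h h := by
  rw [J_eq, sum_range_succ, sum_eq_zero]
  · simp
  intro i hi
  rw [M_lt h i (mem_range.mp hi)]
  simp

lemma J_succ (h : ℕ) : J h (h + 1) = (-1) ^ h * (3 * (h + 1) / 4 * M h h) := by
  rw [J_eq, sum_range_succ, sum_range_succ, sum_eq_zero]
  · rw [M_succ]
    simp
    ring
  intro i hi
  rw [M_lt h i (mem_range.mp hi)]
  simp

lemma final_sum (h : ℕ) :
    ∑ k ∈ range (h + 1), lg h k * 2 ^ k * ((16 * k + 10) * J h k - 16 * (k + 1) * J h (k + 1))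
      = - (-1) ^ h * (2 * h + 1) := by
  have hM := M_self h
  have hpos : (2 * (h : ℝ) + 1) ≠ 0 := by positivity
  rw [sum_range_succ, J_self, J_succ]
  have key : ∑ k ∈ range h, lg h k * 2 ^ k * ((16 * k + 10) * J h k - 16 * (k + 1) * J h (k + 1))
      = 4 * h ^ 2 * (lg h h * 2 ^ h * M h h) * (-1) ^ h := by
    cases h with
    | zero => simp
    | succ n =>
      rw [sum_range_succ, sum_eq_zero]
      · rw [J_lt _ n (by omega), J_self]
        have : lg (n + 1) (n + 1) = - (lg (n + 1) n * 2 / (n + 1)) := by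
          unfold lg
          have h1 : ((n + 1 + (n + 1)).choose (n + 1) : ℝ) = 2 * ((n + 1 + n).choose n) := by
            have := Nat.choose_succ_succ (n + 1 + n) n
            rw [show n + 1 + (n + 1) = (n + 1 + n).succ by rfl, this,
              Nat.choose_symm_of_eq_add (show n + 1 + n = (n + 1) + n by ring)]
            push_cast; ring
          rw [h1, Nat.choose_self, Nat.choose_succ_self_right]
          have : (n : ℝ) + 1 ≠ 0 := by positivity
          push_cast
          field_simp
          ring
        rw [this]
        have : (n : ℝ) + 1 ≠ 0 := by positivity
        push_cast
        field_simp
        ring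
      · intro i hi
        have := mem_range.mp hi
        rw [J_lt _ i (by omega), J_lt _ (i + 1) (by omega)]
        simp
  rw [key]
  have : lg h h * 2 ^ h * ((16 * h + 10) * ((-1) ^ h * M h h) - 16 * (h + 1) * ((-1) ^ h * (3 * (h + 1) / 4 * M h h)))
    = (-1) ^ h * ((16 * h + 10) - 12 * (h + 1) ^ 2) * (lg h h * 2 ^ h * M h h) := by ring
  rw [this, hM]
  field_simp
  ring

noncomputable def dpl (h : ℕ) (u : ℝ) : ℝ := ∑ k ∈ range (h + 1), lg h k * 2 ^ k * (k * u ^ (k - 1))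

@[fun_prop] lemma dpl_cont (h : ℕ) : Continuous (dpl h) := by
  unfold dpl; fun_prop

lemma pl_deriv (h : ℕ) (u : ℝ) : HasDerivAt (pl h) (dpl h u) u := by
  unfold pl dpl
  apply HasDerivAt.fun_sum
  intro k _
  exact (hasDerivAt_pow k u).const_mul _

lemma mul_dpl (h : ℕ) (u : ℝ) : u * dpl h u = ∑ k ∈ range (h + 1), lg h k * 2 ^ k * (k * u ^ k) := by
  unfold dpl
  rw [mul_sum]
  apply sum_congr rfl
  intro k _
  cases k with
  | zero => simp
  | succ k => simp; ring

lemma id_int (h : ℕ) : ∫ u in (0:ℝ)..1,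
      (8 * (1 - u) * (u * dpl h u) + (5 - 8 * u) * pl h u) * pl h (1 - u)
    = 2 - (-1) ^ h * (2 * h + 1) := by
  set F : ℝ → ℝ := fun u => (8 * (1 - u) * (u * dpl h u) + (5 - 8 * u) * pl h u) * pl h (1 - u) with hF
  have hFc : Continuous F := by rw [hF]; fun_prop
  have s1 : ∫ u in (0:ℝ)..1, F u = (∫ u in (0:ℝ)..(1/2), F u) + ∫ u in (1/2:ℝ)..1, F u :=
    (integral_add_adjacent_intervals (hFc.intervalIntegrable _ _) (hFc.intervalIntegrable _ _)).symm
  have s2 : ∫ u in (1/2:ℝ)..1, F u = ∫ u in (0:ℝ)..(1/2), F (1 - u) := by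
    rw [integral_comp_sub_left F 1]; norm_num
  set B' : ℝ → ℝ := fun u => 8 * (1 - 2 * u) * (pl h u * pl h (1 - u))
    + 8 * (u - u ^ 2) * (dpl h u * pl h (1 - u) + pl h u * (dpl h (1 - u) * (-1))) with hB
  have hBc : Continuous B' := by rw [hB]; fun_prop
  have s3 : ∫ u in (0:ℝ)..(1/2), B' u = 2 := by
    have : ∀ u ∈ Set.uIcc (0:ℝ) (1/2),
        HasDerivAt (fun u => 8 * (u - u ^ 2) * (pl h u * pl h (1 - u))) (B' u) u := by
      intro u _
      have d1 : HasDerivAt (fun u : ℝ => 8 * (u - u ^ 2)) (8 * (1 - 2 * u)) u := by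
        have := ((hasDerivAt_id u).sub (hasDerivAt_pow 2 u)).const_mul 8
        simpa using this
      have d2 : HasDerivAt (fun u : ℝ => pl h (1 - u)) (dpl h (1 - u) * (-1)) u := by
        apply (pl_deriv h (1 - u)).comp u
        simpa using (hasDerivAt_id u).const_sub 1
      exact d1.mul ((pl_deriv h u).mul d2)
    rw [integral_eq_sub_of_hasDerivAt this (hBc.intervalIntegrable _ _)]
    have e : ((-1 : ℝ) ^ h) * (-1) ^ h = 1 := by rw [← mul_pow]; simp
    rw [show (1 - 1 / 2 : ℝ) = 1 / 2 by norm_num, pl_half, e]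
    norm_num
  have s4 : ∀ u, F u + F (1 - u) = B' u
      + ∑ k ∈ range (h + 1), lg h k * 2 ^ k * ((16 * k + 10) * (pl h u * (1 - u) ^ k)
        - 16 * (k + 1) * (pl h u * (1 - u) ^ (k + 1))) := by
    intro u
    have e : ∑ k ∈ range (h + 1), lg h k * 2 ^ k * ((16 * k + 10) * (pl h u * (1 - u) ^ k)
        - 16 * (k + 1) * (pl h u * (1 - u) ^ (k + 1)))
      = pl h u * (16 * u * ((1 - u) * dpl h (1 - u)) + (10 - 16 * (1 - u)) * pl h (1 - u)) := by
      rw [mul_dpl]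
      conv_rhs => rw [pl.eq_def h (1 - u)]
      rw [mul_sum, mul_sum, ← sum_add_distrib, mul_sum]
      apply sum_congr rfl
      intro k _
      ring
    rw [e]
    simp only [hF, hB, sub_sub_cancel]
    ring
  rw [s1, s2, ← integral_add (hFc.intervalIntegrable _ _)
    (Continuous.intervalIntegrable (by fun_prop) _ _)]
  simp_rw [s4]
  rw [integral_add (hBc.intervalIntegrable _ _)
    (Continuous.intervalIntegrable (by fun_prop) _ _), s3, integral_finsetSum]
  · have : ∀ k : ℕ, ∫ u in (0:ℝ)..(1/2), lg h k * 2 ^ k * ((16 * k + 10) * (pl h u * (1 - u) ^ k)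
        - 16 * (k + 1) * (pl h u * (1 - u) ^ (k + 1)))
        = lg h k * 2 ^ k * ((16 * k + 10) * J h k - 16 * (k + 1) * J h (k + 1)) := by
      intro k
      rw [integral_const_mul, integral_sub, integral_const_mul, integral_const_mul]
      · rfl
      · exact Continuous.intervalIntegrable (by fun_prop) _ _
      · exact Continuous.intervalIntegrable (by fun_prop) _ _
    simp_rw [this]
    rw [final_sum]
    ring
  · intro i _
    exact Continuous.intervalIntegrable (by fun_prop) _ _

/-- integer coefficients -/
def cf (h k : ℕ) : ℤ := (h.choose k) * ((h + k).choose k) * 2 ^ k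

lemma cf_lg (h k : ℕ) : lg h k * 2 ^ k = (-1) ^ k * (cf h k : ℝ) := by
  unfold lg cf; push_cast; ring

lemma id_rat (h : ℕ) :
    ∑ j ∈ range (h + 1), ∑ k ∈ range (h + 1), (cf h j : ℚ) * cf h k *
      ((-1) ^ (j + k) * ((8 * j + 5) * bet j k - 8 * (j + 1) * bet (j + 1) k))
    = 2 - (-1) ^ h * (2 * h + 1) := by
  have key := id_int h
  have e : ∀ u : ℝ, (8 * (1 - u) * (u * dpl h u) + (5 - 8 * u) * pl h u) * pl h (1 - u)
    = ∑ j ∈ range (h + 1), ∑ k ∈ range (h + 1), (cf h j : ℝ) * cf h k *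
      ((-1) ^ (j + k) * ((8 * j + 5) * (u ^ j * (1 - u) ^ k)
        - 8 * (j + 1) * (u ^ (j + 1) * (1 - u) ^ k))) := by
    intro u
    rw [mul_dpl]
    have e1 : 8 * (1 - u) * ∑ k ∈ range (h + 1), lg h k * 2 ^ k * (k * u ^ k) + (5 - 8 * u) * pl h u
        = ∑ k ∈ range (h + 1), lg h k * 2 ^ k * ((8 * k + 5) * u ^ k - 8 * (k + 1) * u ^ (k + 1)) := by
      unfold pl
      rw [mul_sum, mul_sum, ← sum_add_distrib]
      apply sum_congr rfl
      intro k _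
      ring
    rw [e1]
    unfold pl
    rw [sum_mul_sum]
    apply sum_congr rfl
    intro j _
    apply sum_congr rfl
    intro k _
    rw [cf_lg, cf_lg, pow_add]
    ring
  simp_rw [e] at key
  rw [integral_finsetSum] at key
  · have : ∀ j k : ℕ, ∫ u in (0:ℝ)..1, (cf h j : ℝ) * cf h k *
      ((-1) ^ (j + k) * ((8 * j + 5) * (u ^ j * (1 - u) ^ k)
        - 8 * (j + 1) * (u ^ (j + 1) * (1 - u) ^ k))) = (cf h j : ℝ) * cf h k *
      ((-1) ^ (j + k) * ((8 * j + 5) * (bet j k : ℝ) - 8 * (j + 1) * (bet (j + 1) k : ℝ))) := by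
      intro j k
      rw [integral_const_mul, integral_const_mul, integral_sub, integral_const_mul,
        integral_const_mul, integral_bet, integral_bet]
      · exact Continuous.intervalIntegrable (by fun_prop) _ _
      · exact Continuous.intervalIntegrable (by fun_prop) _ _
    have e2 : ∀ j ∈ range (h + 1), ∫ u in (0:ℝ)..1, ∑ k ∈ range (h + 1), (cf h j : ℝ) * cf h k *
      ((-1) ^ (j + k) * ((8 * j + 5) * (u ^ j * (1 - u) ^ k)
        - 8 * (j + 1) * (u ^ (j + 1) * (1 - u) ^ k))) = ∑ k ∈ range (h + 1), (cf h j : ℝ) * cf h k *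
      ((-1) ^ (j + k) * ((8 * j + 5) * (bet j k : ℝ) - 8 * (j + 1) * (bet (j + 1) k : ℝ))) := by
      intro j _
      rw [integral_finsetSum]
      · exact sum_congr rfl fun k _ => this j k
      · intro i _
        exact Continuous.intervalIntegrable (by fun_prop) _ _
    rw [sum_congr rfl e2] at key
    exact_mod_cast key
  · intro i _
    exact Continuous.intervalIntegrable (by fun_prop) _ _

section padic
variable {p : ℕ} [Fact p.Prime]

/-- the inclusion -/
noncomputable def incl (p : ℕ) [Fact p.Prime] : ℤ_[p] →+* ℚ_[p] := PadicInt.Coe.ringHom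

/-- congruence modulo `p^2` -/
def Cg (a b : ℚ_[p]) : Prop := ∃ c : ℤ_[p], a - b = (p : ℚ_[p]) ^ 2 * incl p c

lemma Cg.rfl' (a : ℚ_[p]) : Cg a a := ⟨0, by simp⟩

lemma Cg.of_eq {a b : ℚ_[p]} (h : a = b) : Cg a b := ⟨0, by simp [h]⟩

lemma Cg.trans' {a b c : ℚ_[p]} (h1 : Cg a b) (h2 : Cg b c) : Cg a c := by
  obtain ⟨x, hx⟩ := h1
  obtain ⟨y, hy⟩ := h2
  exact ⟨x + y, by push_cast [map_add, map_mul, map_sub, map_neg, map_pow, map_one, map_natCast, map_intCast, map_ofNat, map_sum, map_prod]; linear_combination hx + hy⟩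

lemma Cg.add' {a b c d : ℚ_[p]} (h1 : Cg a b) (h2 : Cg c d) : Cg (a + c) (b + d) := by
  obtain ⟨x, hx⟩ := h1
  obtain ⟨y, hy⟩ := h2
  exact ⟨x + y, by push_cast [map_add, map_mul, map_sub, map_neg, map_pow, map_one, map_natCast, map_intCast, map_ofNat, map_sum, map_prod]; linear_combination hx + hy⟩

lemma Cg.smul' {a b : ℚ_[p]} (z : ℤ_[p]) (h1 : Cg a b) : Cg (incl p z * a) (incl p z * b) := by
  obtain ⟨x, hx⟩ := h1
  exact ⟨z * x, by push_cast [map_add, map_mul, map_sub, map_neg, map_pow, map_one, map_natCast, map_intCast, map_ofNat, map_sum, map_prod]; linear_combination incl p z * hx⟩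

lemma Cg.sum' {ι : Type*} (s : Finset ι) (f g : ι → ℚ_[p]) (h : ∀ i ∈ s, Cg (f i) (g i)) :
    Cg (∑ i ∈ s, f i) (∑ i ∈ s, g i) := by
  classical
  induction s using Finset.induction_on with
  | empty => exact Cg.rfl' _
  | insert a s ha ih =>
    rw [sum_insert ha, sum_insert ha]
    exact (h a (mem_insert_self _ _)).add' (ih fun i hi => h i (mem_insert_of_mem hi))

lemma Cg.sq' {a : ℚ_[p]} {z : ℤ_[p]} (h1 : Cg a (incl p z)) : Cg (a ^ 2) (incl p z ^ 2) := by
  obtain ⟨x, hx⟩ := h1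
  refine ⟨x * (2 * z + p ^ 2 * x), ?_⟩
  have : a = incl p z + (p : ℚ_[p]) ^ 2 * incl p x := by linear_combination hx
  rw [this]
  push_cast [map_add, map_mul, map_sub, map_neg, map_pow, map_one, map_natCast, map_intCast, map_ofNat, map_sum, map_prod]
  ring

lemma exists_inv (n : ℕ) (h0 : 0 < n) (hn : n < p) : ∃ z : ℤ_[p], (n : ℚ_[p]) * incl p z = 1 := by
  have hp : p.Prime := Fact.out
  have hc : Nat.Coprime p n := (Nat.coprime_of_lt_prime h0.ne' hn hp)
  have hu : IsUnit (n : ℤ_[p]) := by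
    rw [PadicInt.isUnit_iff, PadicInt.norm_def]
    push_cast [map_add, map_mul, map_sub, map_neg, map_pow, map_one, map_natCast, map_intCast, map_ofNat, map_sum, map_prod]
    exact (Padic.norm_natCast_eq_one_iff).mpr hc
  obtain ⟨z, hz⟩ := hu.exists_right_inv
  exact ⟨z, by have := congrArg (incl p) hz; simpa using this⟩

lemma exists_inv_fac (n : ℕ) (hn : n < p) : ∃ z : ℤ_[p], (n.factorial : ℚ_[p]) * incl p z = 1 := by
  induction n with
  | zero => exact ⟨1, by simp⟩
  | succ n ih =>
    obtain ⟨z, hz⟩ := ih (by omega)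
    obtain ⟨w, hw⟩ := exists_inv (p := p) (n + 1) (by omega) hn
    refine ⟨z * w, ?_⟩
    rw [Nat.factorial_succ]
    push_cast [map_add, map_mul, map_sub, map_neg, map_pow, map_one, map_natCast, map_intCast, map_ofNat, map_sum, map_prod] at hw ⊢
    linear_combination ((n : ℚ_[p]) + 1) * incl p w * hz + hw

lemma dvd_choose (k : ℕ) (h0 : 0 < k) (hk : k < p) : ∃ z : ℤ_[p], (p.choose k : ℚ_[p]) = (p : ℚ_[p]) * incl p z := by
  have hp : p.Prime := Fact.out
  obtain ⟨c, hc⟩ := hp.dvd_choose_self h0.ne' hk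
  have h2 : incl p (c : ℤ_[p]) = (c : ℚ_[p]) := map_natCast _ _
  exact ⟨(c : ℤ_[p]), by rw [h2, hc, Nat.cast_mul]⟩

lemma choose_pred (k : ℕ) (hk : k < p) :
    ∃ z : ℤ_[p], ((p - 1).choose k : ℚ_[p]) = (-1) ^ k + (p : ℚ_[p]) * incl p z := by
  have hp : p.Prime := Fact.out
  induction k with
  | zero => exact ⟨0, by simp⟩
  | succ k ih =>
    obtain ⟨z, hz⟩ := ih (by omega)
    obtain ⟨w, hw⟩ := dvd_choose (p := p) (k + 1) (by omega) hk
    have : p.choose (k + 1) = (p - 1).choose k + (p - 1).choose (k + 1) := by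
      rw [← Nat.choose_succ_succ, Nat.succ_eq_add_one, Nat.sub_add_cancel hp.one_le]
    rw [this] at hw
    refine ⟨w - z, ?_⟩
    push_cast [map_add, map_mul, map_sub, map_neg, map_pow, map_one, map_natCast, map_intCast, map_ofNat, map_sum, map_prod] at hw ⊢
    linear_combination hw - hz

/-- double binomial sum -/
noncomputable def A (p : ℕ) [Fact p.Prime] (j k : ℕ) : ℚ_[p] :=
  ∑ n ∈ range p, (n.choose j : ℚ_[p]) * (n.choose k)

lemma A_rec (j k : ℕ) : A p j k + A p j (k + 1) + A p (j + 1) k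
    = (p.choose (j + 1) : ℚ_[p]) * (p.choose (k + 1)) := by
  have := sum_range_sub (fun n : ℕ => (n.choose (j + 1) : ℚ_[p]) * (n.choose (k + 1))) p
  simp only [Nat.choose_zero_succ, Nat.cast_zero, zero_mul, sub_zero] at this
  rw [← this]
  unfold A
  rw [← sum_add_distrib, ← sum_add_distrib]
  apply sum_congr rfl
  intro n _
  rw [Nat.choose_succ_succ, Nat.choose_succ_succ n k]
  push_cast [map_add, map_mul, map_sub, map_neg, map_pow, map_one, map_natCast, map_intCast, map_ofNat, map_sum, map_prod]
  ring

lemma A_symm (j k : ℕ) : A p j k = A p k j := by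
  unfold A; simp_rw [mul_comm]

lemma A_zero (k : ℕ) : A p 0 k = p.choose (k + 1) := by
  have := sum_range_sub (fun n : ℕ => (n.choose (k + 1) : ℚ_[p])) p
  simp only [Nat.choose_zero_succ, Nat.cast_zero, sub_zero] at this
  rw [← this]
  unfold A
  apply sum_congr rfl
  intro n _
  rw [Nat.choose_succ_succ]
  simp

lemma A_cong (hp2 : p ≠ 2) (j k : ℕ) (hjk : j + k < p) :
    Cg (A p j k) ((p : ℚ_[p]) * ((-1) ^ (j + k) * ((bet j k : ℚ) : ℚ_[p]))) := by
  have hp : p.Prime := Fact.out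
  induction j generalizing k with
  | zero =>
    rw [A_zero, bet_zero]
    simp only [zero_add] at hjk ⊢
    have hk1 : (k : ℚ_[p]) + 1 ≠ 0 := by exact_mod_cast (show k + 1 ≠ 0 by omega)
    rcases Nat.lt_or_ge (k + 1) p with hlt | hge
    · obtain ⟨z, hz⟩ := choose_pred (p := p) k hjk
      obtain ⟨w, hw⟩ := exists_inv (p := p) (k + 1) (by omega) hlt
      have h1 : (p.choose (k + 1) : ℚ_[p]) * (k + 1) = p * (p - 1).choose k := by
        have := Nat.add_one_mul_choose_eq (p - 1) k
        rw [Nat.sub_add_cancel hp.one_le] at this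
        exact_mod_cast this.symm
      refine ⟨z * w, ?_⟩
      have hw' : (incl p w) = 1 / (k + 1) := by
        push_cast [map_add, map_mul, map_sub, map_neg, map_pow, map_one, map_natCast, map_intCast, map_ofNat, map_sum, map_prod] at hw
        field_simp
        linear_combination hw
      push_cast [map_add, map_mul, map_sub, map_neg, map_pow, map_one, map_natCast, map_intCast, map_ofNat, map_sum, map_prod]
      rw [hw']
      field_simp
      rw [h1, hz]
      ring
    · have : k + 1 = p := by omega
      apply Cg.of_eq
      have hev : Even k := by
        have := hp.odd_of_ne_two hp2
        obtain ⟨m, hm⟩ := this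
        exact ⟨m, by omega⟩
      rw [this, hev.neg_one_pow, Nat.choose_self]
      have hc : (p : ℚ_[p]) = k + 1 := by exact_mod_cast this.symm
      rw [hc]
      push_cast [map_add, map_mul, map_sub, map_neg, map_pow, map_one, map_natCast, map_intCast, map_ofNat, map_sum, map_prod]
      field_simp
  | succ j ih =>
    obtain ⟨z, hz⟩ := dvd_choose (p := p) (j + 1) (by omega) (by omega)
    obtain ⟨w, hw⟩ := dvd_choose (p := p) (k + 1) (by omega) (by omega)
    obtain ⟨c, hc⟩ := ih k (by omega)
    obtain ⟨d, hd⟩ := ih (k + 1) (by omega)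
    have hr := A_rec (p := p) j k
    rw [hz, hw] at hr
    rw [bet_rec]
    refine ⟨z * w - c - d, ?_⟩
    push_cast [map_add, map_mul, map_sub, map_neg, map_pow, map_one, map_natCast, map_intCast, map_ofNat, map_sum, map_prod]
    rw [show j + 1 + k = j + k + 1 by ring, pow_succ]
    rw [← add_assoc, pow_succ] at hd
    linear_combination hr - hc - hd

lemma A_cong_mid (h : ℕ) (hh : p = 2 * h + 1) :
    Cg (A p (h + 1) h) ((p : ℚ_[p]) * ((-1) ^ (h + 1 + h) * ((bet (h + 1) h : ℚ) : ℚ_[p]))) := by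
  have hp : p.Prime := Fact.out
  have hpos : 2 ≤ p := hp.two_le
  obtain ⟨c, hc⟩ := A_cong (p := p) (by omega) h h (by omega)
  obtain ⟨z, hz⟩ := dvd_choose (p := p) (h + 1) (by omega) (by omega)
  obtain ⟨w, hw⟩ := exists_inv (p := p) 2 (by omega) (by omega)
  have hr := A_rec (p := p) h h
  rw [A_symm h (h + 1), hz] at hr
  have hb := bet_rec h h
  have hb2 : bet h (h + 1) = bet (h + 1) h := by
    unfold bet
    rw [show h + (h + 1) + 1 = h + 1 + h + 1 by ring, mul_comm (h.factorial : ℚ)]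
  have hb3 : bet h h = 2 * bet (h + 1) h := by linarith
  rw [hb3] at hc
  refine ⟨w * (z * z - c), ?_⟩
  push_cast [map_add, map_mul, map_sub, map_neg, map_pow, map_one, map_natCast, map_intCast, map_ofNat, map_sum, map_prod] at hc hw ⊢
  rw [show h + 1 + h = h + h + 1 by ring, pow_succ]
  linear_combination incl p w * (hr - hc) - (A p (h + 1) h + p * (-1) ^ (h + h) * (bet (h + 1) h : ℚ)) * hw

lemma W_eq (j k : ℕ) : ∑ n ∈ range p, (8 * (n : ℚ_[p]) + 5) * ((n.choose j : ℚ_[p]) * (n.choose k : ℚ_[p]))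
    = (8 * (j : ℚ_[p]) + 5) * A p j k + 8 * ((j : ℚ_[p]) + 1) * A p (j + 1) k := by
  unfold A
  rw [mul_sum, mul_sum, ← sum_add_distrib]
  apply sum_congr rfl
  intro n _
  have : (n : ℚ_[p]) * n.choose j = j * n.choose j + (j + 1) * n.choose (j + 1) := by
    rcases Nat.lt_or_ge n j with h | h
    · rw [Nat.choose_eq_zero_of_lt h, Nat.choose_eq_zero_of_lt (by omega)]; simp
    · have := Nat.choose_succ_right_eq n j
      obtain ⟨d, rfl⟩ := Nat.exists_eq_add_of_le h
      rw [Nat.add_sub_cancel_left] at this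
      have := congrArg (Nat.cast : ℕ → ℚ_[p]) this
      push_cast [map_add, map_mul, map_sub, map_neg, map_pow, map_one, map_natCast, map_intCast, map_ofNat, map_sum, map_prod] at this ⊢
      linear_combination -this
  linear_combination 8 * (n.choose k : ℚ_[p]) * this

lemma W_cong (h : ℕ) (hh : p = 2 * h + 1) (j k : ℕ) (hj : j ≤ h) (hk : k ≤ h) :
    Cg (∑ n ∈ range p, (8 * (n : ℚ_[p]) + 5) * ((n.choose j : ℚ_[p]) * (n.choose k : ℚ_[p])))
      ((p : ℚ_[p]) * ((-1) ^ (j + k) * ((8 * (j : ℚ_[p]) + 5) * ((bet j k : ℚ) : ℚ_[p])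
        - 8 * ((j : ℚ_[p]) + 1) * ((bet (j + 1) k : ℚ) : ℚ_[p])))) := by
  have hp : p.Prime := Fact.out
  have hpos : 2 ≤ p := hp.two_le
  rw [W_eq]
  obtain ⟨c, hc⟩ := A_cong (p := p) (by omega) j k (by omega)
  have : Cg (A p (j + 1) k) ((p : ℚ_[p]) * ((-1) ^ (j + 1 + k) * ((bet (j + 1) k : ℚ) : ℚ_[p]))) := by
    rcases Nat.lt_or_ge (j + 1 + k) p with h1 | h1
    · exact A_cong (by omega) _ _ h1
    · have e1 : j = h := by omega
      have e2 : k = h := by omega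
      subst e1 e2
      exact A_cong_mid _ hh
  obtain ⟨d, hd⟩ := this
  refine ⟨(8 * j + 5) * c + 8 * (j + 1) * d, ?_⟩
  rw [show j + 1 + k = j + k + 1 by ring, pow_succ] at hd
  push_cast [map_add, map_mul, map_sub, map_neg, map_pow, map_one, map_natCast, map_intCast, map_ofNat, map_sum, map_prod]
  linear_combination (8 * (j : ℚ_[p]) + 5) * hc + 8 * ((j : ℚ_[p]) + 1) * hd

lemma gbinom_nat (n k : ℕ) : gbinom (n : ℚ_[p]) k = n.choose k := by
  induction k with
  | zero => simp [gbinom]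
  | succ k ih =>
    unfold gbinom at ih ⊢
    have hf : (k.factorial : ℚ_[p]) ≠ 0 := by exact_mod_cast k.factorial_ne_zero
    have hk : (k : ℚ_[p]) + 1 ≠ 0 := by exact_mod_cast (show k + 1 ≠ 0 by omega)
    rw [prod_range_succ, Nat.factorial_succ]
    have h1 : (n.choose (k + 1) : ℚ_[p]) * (k + 1) = n.choose k * (n - k) := by
      rcases Nat.lt_or_ge n k with h | h
      · rw [Nat.choose_eq_zero_of_lt h, Nat.choose_eq_zero_of_lt (by omega)]; simp
      · have := Nat.choose_succ_right_eq n k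
        obtain ⟨d, rfl⟩ := Nat.exists_eq_add_of_le h
        rw [Nat.add_sub_cancel_left] at this
        have := congrArg (Nat.cast : ℕ → ℚ_[p]) this
        push_cast [map_add, map_mul, map_sub, map_neg, map_pow, map_one, map_natCast, map_intCast, map_ofNat, map_sum, map_prod] at this ⊢
        linear_combination this
    rw [← ih] at h1
    push_cast [map_add, map_mul, map_sub, map_neg, map_pow, map_one, map_natCast, map_intCast, map_ofNat, map_sum, map_prod]
    field_simp at h1 ⊢
    linear_combination -h1

lemma gbinom_mul (x : ℚ_[p]) (k : ℕ) : gbinom x k * gbinom (x + (k : ℚ_[p])) k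
    = (∏ i ∈ range k, (x * (x + 1) - (i : ℚ_[p]) * ((i : ℚ_[p]) + 1))) / (k.factorial : ℚ_[p]) ^ 2 := by
  unfold gbinom
  have : ∏ i ∈ range k, (x + (k : ℚ_[p]) - (i : ℚ_[p])) = ∏ i ∈ range k, (x + 1 + (i : ℚ_[p])) := by
    rw [← prod_range_reflect]
    apply prod_congr rfl
    intro i hi
    have : i + 1 ≤ k := mem_range.mp hi
    rw [show k - 1 - i = k - (i + 1) by omega, Nat.cast_sub this]
    push_cast [map_add, map_mul, map_sub, map_neg, map_pow, map_one, map_natCast, map_intCast, map_ofNat, map_sum, map_prod]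
    ring
  rw [this, div_mul_div_comm, ← prod_mul_distrib, sq]
  congr 1
  apply prod_congr rfl
  intro i _
  ring

lemma prod_cong (y y' c : ℤ_[p]) (hy : y = y' + p ^ 2 * c) (k : ℕ) :
    ∃ z : ℤ_[p], ∏ i ∈ range k, (y - i * (i + 1)) = ∏ i ∈ range k, (y' - i * (i + 1)) + p ^ 2 * z := by
  induction k with
  | zero => exact ⟨0, by simp⟩
  | succ k ih =>
    obtain ⟨z, hz⟩ := ih
    rw [prod_range_succ, prod_range_succ, hz, hy]
    exact ⟨z * (y' + p ^ 2 * c - k * (k + 1)) + (∏ i ∈ range k, (y' - i * (i + 1))) * c, by ring⟩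

lemma g_cong (h : ℕ) (hh : p = 2 * h + 1) (k : ℕ) (hk : k < p) :
    Cg (gbinom (-1/2 : ℚ_[p]) k * gbinom (-1/2 + (k : ℚ_[p])) k)
      ((h.choose k : ℚ_[p]) * ((h + k).choose k : ℚ_[p])) := by
  have hp : p.Prime := Fact.out
  have hpos : 2 ≤ p := hp.two_le
  have e := gbinom_mul (p := p) (h : ℚ_[p]) k
  rw [gbinom_nat, show (h : ℚ_[p]) + k = ((h + k : ℕ) : ℚ_[p]) by push_cast [map_add, map_mul, map_sub, map_neg, map_pow, map_one, map_natCast, map_intCast, map_ofNat, map_sum, map_prod]; ring, gbinom_nat] at e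
  rw [e, gbinom_mul]
  obtain ⟨w, hw⟩ := exists_inv (p := p) 2 (by omega) (by omega)
  obtain ⟨f, hf⟩ := exists_inv_fac (p := p) k hk
  have hk0 : (k.factorial : ℚ_[p]) ≠ 0 := by exact_mod_cast k.factorial_ne_zero
  obtain ⟨z, hz⟩ := prod_cong (p := p) (h * (h + 1) - p ^ 2 * w ^ 2) (h * (h + 1)) (- w ^ 2) (by ring) k
  have hz' := congrArg (incl p) hz
  push_cast [map_add, map_mul, map_sub, map_neg, map_pow, map_one, map_natCast, map_intCast, map_ofNat, map_sum, map_prod] at hz' hw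
  have hw' : (incl p w) = 1 / 2 := by
    field_simp; linear_combination hw
  have e2 : (-1 / 2 : ℚ_[p]) * (-1 / 2 + 1) = (h : ℚ_[p]) * (h + 1) - (p : ℚ_[p]) ^ 2 * incl p w ^ 2 := by
    have : (p : ℚ_[p]) = 2 * h + 1 := by exact_mod_cast hh
    rw [this, hw']; ring
  rw [e2, hz']
  have hf' : (incl p f) = 1 / k.factorial := by
    field_simp; linear_combination hf
  refine ⟨z * f ^ 2, ?_⟩
  push_cast [map_add, map_mul, map_sub, map_neg, map_pow, map_one, map_natCast, map_intCast, map_ofNat, map_sum, map_prod]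
  rw [hf']
  field_simp
  ring

noncomputable def T (p : ℕ) [Fact p.Prime] (h n : ℕ) : ℤ_[p] :=
  ∑ k ∈ range (h + 1), (n.choose k : ℤ_[p]) * (cf h k : ℤ_[p])

lemma T_alt (h n : ℕ) : T p h n = ∑ k ∈ range (n + 1), (n.choose k : ℤ_[p]) * (cf h k : ℤ_[p]) := by
  have h1 : T p h n = ∑ k ∈ range (n + 1 + (h + 1)), (n.choose k : ℤ_[p]) * (cf h k : ℤ_[p]) := by
    apply sum_subset
    · intro x hx; simp at *; omega
    · intro x _ hx
      simp at hx
      simp [cf, Nat.choose_eq_zero_of_lt (show h < x by omega)]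
  rw [h1]
  symm
  apply sum_subset
  · intro x hx; simp at *; omega
  · intro x _ hx
    simp at hx
    simp [Nat.choose_eq_zero_of_lt (show n < x by omega)]

lemma t_cong (h : ℕ) (hh : p = 2 * h + 1) (n : ℕ) (hn : n < p) :
    Cg (tseq (-1/2 : ℚ_[p]) n) (incl p (T p h n)) := by
  rw [T_alt, tseq]
  push_cast [map_add, map_mul, map_sub, map_neg, map_pow, map_one, map_natCast, map_intCast, map_ofNat, map_sum, map_prod]
  apply Cg.sum'
  intro k hk
  have hk' : k < n + 1 := mem_range.mp hk
  have := (g_cong h hh k (by omega)).smul' ((n.choose k : ℤ_[p]) * 2 ^ k)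
  push_cast [map_add, map_mul, map_sub, map_neg, map_pow, map_one, map_natCast, map_intCast, map_ofNat, map_sum, map_prod, cf] at this ⊢
  convert this using 1 <;> ring

lemma sum_T (h : ℕ) (hh : p = 2 * h + 1) :
    Cg (∑ n ∈ range p, (8 * (n : ℚ_[p]) + 5) * (incl p (T p h n)) ^ 2)
      ((p : ℚ_[p]) * (2 - (-1) ^ h * (2 * (h : ℚ_[p]) + 1))) := by
  have e : ∑ n ∈ range p, (8 * (n : ℚ_[p]) + 5) * (incl p (T p h n)) ^ 2
    = ∑ j ∈ range (h + 1), ∑ k ∈ range (h + 1), incl p ((cf h j : ℤ_[p]) * (cf h k : ℤ_[p])) *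
      ∑ n ∈ range p, (8 * (n : ℚ_[p]) + 5) * ((n.choose j : ℚ_[p]) * (n.choose k : ℚ_[p])) := by
    have e1 : ∀ n : ℕ, (8 * (n : ℚ_[p]) + 5) * (incl p (T p h n)) ^ 2
        = ∑ j ∈ range (h + 1), ∑ k ∈ range (h + 1), incl p ((cf h j : ℤ_[p]) * (cf h k : ℤ_[p])) *
          ((8 * (n : ℚ_[p]) + 5) * ((n.choose j : ℚ_[p]) * (n.choose k : ℚ_[p]))) := by
      intro n
      unfold T
      rw [map_sum, sq, sum_mul_sum, mul_sum]
      apply sum_congr rfl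
      intro j _
      rw [mul_sum]
      apply sum_congr rfl
      intro k _
      push_cast [map_add, map_mul, map_sub, map_neg, map_pow, map_one, map_natCast, map_intCast, map_ofNat, map_sum, map_prod]
      ring
    simp_rw [mul_sum]
    rw [sum_congr rfl fun n _ => e1 n, sum_comm]
    apply sum_congr rfl
    intro j _
    rw [sum_comm]
  rw [e]
  have r := congrArg (fun a : ℚ => (a : ℚ_[p])) (id_rat h)
  push_cast [map_add, map_mul, map_sub, map_neg, map_pow, map_one, map_natCast, map_intCast, map_ofNat, map_sum, map_prod] at r
  rw [← r, mul_sum]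
  apply Cg.sum'
  intro j hj
  rw [mul_sum]
  apply Cg.sum'
  intro k hk
  have := (W_cong h hh j k (by simpa [Nat.lt_succ_iff] using hj)
    (by simpa [Nat.lt_succ_iff] using hk)).smul' ((cf h j : ℤ_[p]) * (cf h k : ℤ_[p]))
  convert this using 1
  push_cast [map_add, map_mul, map_sub, map_neg, map_pow, map_one, map_natCast, map_intCast, map_ofNat, map_sum, map_prod]
  ring

end padic
end S17

theorem stmt_17 (p : ℕ) [Fact p.Prime] (hp : p ≠ 2) :
    ‖(∑ n ∈ Finset.range p, (8*(n : ℚ_[p]) + 5) * (tseq (-1/2 : ℚ_[p]) n)^2) - 2*(p : ℚ_[p])‖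
      ≤ (p : ℝ) ^ (-2 : ℤ) := by
  have hprime : p.Prime := Fact.out
  obtain ⟨h, hh⟩ := hprime.odd_of_ne_two hp
  have h1 : S17.Cg (∑ n ∈ Finset.range p, (8*(n : ℚ_[p]) + 5) * (tseq (-1/2 : ℚ_[p]) n)^2)
      (∑ n ∈ Finset.range p, (8 * (n : ℚ_[p]) + 5) * (S17.incl p (S17.T p h n)) ^ 2) := by
    apply S17.Cg.sum'
    intro n hn
    have := (S17.t_cong h hh n (Finset.mem_range.mp hn)).sq'.smul' (8 * n + 5 : ℤ_[p])
    push_cast [map_add, map_mul, map_sub, map_neg, map_pow, map_one, map_natCast, map_intCast, map_ofNat, map_sum, map_prod] at this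
    exact this
  obtain ⟨c, hc⟩ := h1.trans' (S17.sum_T h hh)
  have hpe : (p : ℚ_[p]) = 2 * h + 1 := by exact_mod_cast hh
  have e : (∑ n ∈ Finset.range p, (8*(n : ℚ_[p]) + 5) * (tseq (-1/2 : ℚ_[p]) n)^2) - 2*(p : ℚ_[p])
      = (p : ℚ_[p]) ^ 2 * S17.incl p (c - (-1) ^ h) := by
    push_cast [map_add, map_mul, map_sub, map_neg, map_pow, map_one, map_natCast, map_intCast, map_ofNat, map_sum, map_prod]
    linear_combination hc + p * (-1) ^ h * hpe
  rw [e, norm_mul, norm_pow, Padic.norm_p, inv_pow, zpow_neg]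
  have := PadicInt.norm_le_one (c - (-1) ^ h : ℤ_[p])
  rw [PadicInt.norm_def] at this
  change _ * ‖((c - (-1) ^ h : ℤ_[p]) : ℚ_[p])‖ ≤ _
  exact_mod_cast mul_le_of_le_one_right (by positivity) this
end

section
/- Define t_n(x) = Σ_{k=0}^n C(n,k)*C(x,k)*C(x+k,k)*2^k with x = −1/4 in Z_p. For any odd prime p, Σ_{n=0}^{p-1} (32n+21)·t_n(−1/4)^2 ≡ 8p (mod p^2). -/
section Rational

variable {p : ℕ} [Fact p.Prime]

/-- The product `C(x,k) C(x+k,k)`. -/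
noncomputable def ff (x : ℚ_[p]) (k : ℕ) : ℚ_[p] := gbinom x k * gbinom (x + (k : ℚ_[p])) k

lemma ff_eq (x : ℚ_[p]) (k : ℕ) :
    ff x k = ∏ i ∈ Finset.range k, ((x - i) * (x + i + 1) / ((i : ℚ_[p]) + 1) ^ 2) := by
  unfold ff gbinom
  rw [← Finset.prod_range_reflect (fun i : ℕ => x + (k : ℚ_[p]) - i), ← Finset.prod_range_add_one_eq_factorial]
  rw [div_mul_div_comm, Finset.prod_div_distrib, Finset.prod_mul_distrib]
  congr 1
  · congr 1
    apply Finset.prod_congr rfl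
    intro i hi
    have : i + 1 ≤ k := Finset.mem_range.mp hi
    rw [show k - 1 - i = k - (i + 1) by omega, Nat.cast_sub this]
    push_cast; ring
  · rw [Finset.prod_pow, sq]; push_cast; rfl

lemma ff_zero (x : ℚ_[p]) : ff x 0 = 1 := by simp [ff_eq]

lemma ff_succ (x : ℚ_[p]) (k : ℕ) :
    ((k : ℚ_[p]) + 1) ^ 2 * ff x (k + 1) = (x - k) * (x + k + 1) * ff x k := by
  have h : ((k : ℚ_[p]) + 1) ≠ 0 := by exact_mod_cast Nat.succ_ne_zero k
  rw [ff_eq, ff_eq, Finset.prod_range_succ]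
  field_simp

lemma ff_symm (x : ℚ_[p]) (k : ℕ) : ff (-1 - x) k = ff x k := by
  rw [ff_eq, ff_eq]
  apply Finset.prod_congr rfl
  intro i _
  congr 1
  ring

lemma ff_shift (y : ℚ_[p]) (k : ℕ) : (y - (k : ℚ_[p])) * ff y k = (y + (k : ℚ_[p])) * ff (y - 1) k := by
  induction k with
  | zero => simp [ff_zero]
  | succ k ih =>
    have h : ((k : ℚ_[p]) + 1) ≠ 0 := by exact_mod_cast Nat.succ_ne_zero k
    have h1 := ff_succ y k
    have h2 := ff_succ (y - 1) k
    apply mul_left_cancel₀ (pow_ne_zero 2 h)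
    push_cast
    linear_combination (y - k - 1) * h1 - (y + k + 1) * h2 + (y - k - 1) * (y + k + 1) * ih

lemma tseq_eq (x : ℚ_[p]) (n M : ℕ) (h : n < M) :
    tseq x n = ∑ k ∈ Finset.range M, (n.choose k : ℚ_[p]) * ff x k * 2 ^ k := by
  unfold tseq
  rw [← Finset.sum_subset (Finset.range_mono (show n + 1 ≤ M from h))]
  · apply Finset.sum_congr rfl
    intro k _
    unfold ff; ring
  · intro k _ hk
    rw [Nat.choose_eq_zero_of_lt (by simpa using hk)]; simp

lemma tseq_zero (x : ℚ_[p]) : tseq x 0 = 1 := by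
  rw [tseq_eq x 0 1 (by norm_num)]; simp [ff_zero]

lemma tseq_symm (x : ℚ_[p]) (n : ℕ) : tseq (-1 - x) n = tseq x n := by
  rw [tseq_eq _ n (n + 1) (by omega), tseq_eq _ n (n + 1) (by omega)]
  simp only [ff_symm]

lemma tseq_R1 (y : ℚ_[p]) (n : ℕ) :
    y * (tseq y (n + 1) - tseq (y - 1) (n + 1)) =
      ((n : ℚ_[p]) + 1) * (tseq y (n + 1) + tseq (y - 1) (n + 1) - (tseq y n + tseq (y - 1) n)) := by
  rw [tseq_eq y (n + 1) (n + 2) (by omega), tseq_eq (y - 1) (n + 1) (n + 2) (by omega),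
    tseq_eq y n (n + 2) (by omega), tseq_eq (y - 1) n (n + 2) (by omega)]
  simp only [← Finset.sum_sub_distrib, ← Finset.sum_add_distrib, Finset.mul_sum]
  apply Finset.sum_congr rfl
  intro k _
  have h := ff_shift y k
  have hc : (k : ℚ_[p]) * ((n + 1).choose k : ℕ) =
      ((n : ℚ_[p]) + 1) * (((n + 1).choose k : ℕ) - (n.choose k : ℕ)) := by
    cases k with
    | zero => simp
    | succ k =>
      have h1 := Nat.add_one_mul_choose_eq n k
      have h2 := Nat.choose_succ_succ' n k
      have h1' : ((n : ℚ_[p]) + 1) * (n.choose k : ℕ) = ((n + 1).choose (k + 1) : ℕ) * ((k : ℚ_[p]) + 1) := by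
        exact_mod_cast h1
      have h2' : (((n + 1).choose (k + 1) : ℕ) : ℚ_[p]) = (n.choose k : ℕ) + (n.choose (k + 1) : ℕ) := by
        exact_mod_cast h2
      push_cast
      linear_combination -h1' - ((n : ℚ_[p]) + 1) * h2'
  linear_combination ((n + 1).choose k : ℚ_[p]) * 2 ^ k * h + (ff y k + ff (y - 1) k) * 2 ^ k * hc

lemma ff_R2 (y : ℚ_[p]) (k : ℕ) :
    (k : ℚ_[p]) * (ff y k - ff (y - 1) k) + ((k : ℚ_[p]) + 1) * (ff y (k + 1) - ff (y - 1) (k + 1)) =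
      y * (ff y k + ff (y - 1) k) := by
  have h : ((k : ℚ_[p]) + 1) ≠ 0 := by exact_mod_cast Nat.succ_ne_zero k
  have h1 := ff_succ y k
  have h2 := ff_succ (y - 1) k
  have h3 := ff_shift y k
  apply mul_left_cancel₀ h
  linear_combination h1 - h2 + y * h3

lemma tseq_one (y : ℚ_[p]) : tseq y 1 - tseq (y - 1) 1 = 4 * y := by
  have h := ff_R2 y 0
  rw [tseq_eq y 1 2 (by omega), tseq_eq (y - 1) 1 2 (by omega)]
  simp only [Finset.sum_range_succ, Finset.sum_range_zero, ff_zero, Nat.choose_zero_right, Nat.choose_one_right,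
    Nat.cast_zero, Nat.cast_one, zero_add] at h ⊢
  linear_combination 2 * h

lemma tseq_R2 (y : ℚ_[p]) (n : ℕ) :
    ((n : ℚ_[p]) + 2) * (tseq y (n + 2) - tseq (y - 1) (n + 2))
      - (tseq y (n + 1) - tseq (y - 1) (n + 1)) - ((n : ℚ_[p]) + 1) * (tseq y n - tseq (y - 1) n) =
      2 * y * (tseq y (n + 1) + tseq (y - 1) (n + 1)) := by
  have key : ∀ k : ℕ, ((n : ℚ_[p]) + 2) * ((n + 2).choose (k + 1) : ℕ) - ((n + 1).choose (k + 1) : ℕ)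
      - ((n : ℚ_[p]) + 1) * (n.choose (k + 1) : ℕ) =
      2 * ((k : ℚ_[p]) + 1) * ((n + 1).choose (k + 1) : ℕ) + ((k : ℚ_[p]) + 1) * ((n + 1).choose k : ℕ) := by
    intro k
    have a1 : (((n + 2).choose (k + 1) : ℕ) : ℚ_[p]) = ((n + 1).choose k : ℕ) + ((n + 1).choose (k + 1) : ℕ) := by
      exact_mod_cast Nat.choose_succ_succ' (n + 1) k
    have a2 : (((n + 1).choose (k + 1) : ℕ) : ℚ_[p]) = (n.choose k : ℕ) + (n.choose (k + 1) : ℕ) := by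
      exact_mod_cast Nat.choose_succ_succ' n k
    have a3 : ((n : ℚ_[p]) + 1) * (n.choose k : ℕ) = ((n + 1).choose (k + 1) : ℕ) * ((k : ℚ_[p]) + 1) := by
      exact_mod_cast Nat.add_one_mul_choose_eq n k
    have a4 : ((n : ℚ_[p]) + 2) * ((n + 1).choose k : ℕ) = ((n + 2).choose (k + 1) : ℕ) * ((k : ℚ_[p]) + 1) := by
      exact_mod_cast Nat.add_one_mul_choose_eq (n + 1) k
    linear_combination ((n : ℚ_[p]) + 2 + k + 1) * a1 + a3 + ((n : ℚ_[p]) + 1) * a2 + a4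
  let G : ℕ → ℚ_[p] := fun k => (ff y k - ff (y - 1) k) * 2 ^ k
  have e : ∀ m : ℕ, m < n + 3 → tseq y m - tseq (y - 1) m =
      ∑ k ∈ Finset.range (n + 3), (m.choose k : ℚ_[p]) * G k := by
    intro m hm
    rw [tseq_eq y m (n + 3) hm, tseq_eq (y - 1) m (n + 3) hm, ← Finset.sum_sub_distrib]
    apply Finset.sum_congr rfl
    intro k _
    simp only [G]; ring
  rw [e (n + 2) (by omega), e (n + 1) (by omega), e n (by omega), Finset.mul_sum, Finset.mul_sum,
    ← Finset.sum_sub_distrib, ← Finset.sum_sub_distrib, Finset.sum_range_succ']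
  have t0 : ((n : ℚ_[p]) + 2) * (((n + 2).choose 0 : ℕ) * G 0) - ((n + 1).choose 0 : ℕ) * G 0
      - ((n : ℚ_[p]) + 1) * ((n.choose 0 : ℕ) * G 0) = 0 := by simp only [Nat.choose_zero_right]; push_cast; ring
  rw [t0, add_zero]
  have t1 : ∀ k ∈ Finset.range (n + 2), ((n : ℚ_[p]) + 2) * (((n + 2).choose (k + 1) : ℕ) * G (k + 1))
      - ((n + 1).choose (k + 1) : ℕ) * G (k + 1) - ((n : ℚ_[p]) + 1) * ((n.choose (k + 1) : ℕ) * G (k + 1))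
      = 2 * ((k + 1 : ℕ) : ℚ_[p]) * ((n + 1).choose (k + 1) : ℕ) * G (k + 1)
        + ((k : ℚ_[p]) + 1) * ((n + 1).choose k : ℕ) * G (k + 1) := by
    intro k _
    push_cast
    linear_combination G (k + 1) * key k
  rw [Finset.sum_congr rfl t1, Finset.sum_add_distrib]
  have t2 : ∑ k ∈ Finset.range (n + 2), 2 * ((k + 1 : ℕ) : ℚ_[p]) * ((n + 1).choose (k + 1) : ℕ) * G (k + 1)
      = ∑ k ∈ Finset.range (n + 2), 2 * (k : ℚ_[p]) * ((n + 1).choose k : ℕ) * G k := by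
    have := Finset.sum_range_succ' (fun k : ℕ => 2 * (k : ℚ_[p]) * ((n + 1).choose k : ℕ) * G k) (n + 2)
    rw [Finset.sum_range_succ] at this
    have z : (n + 1).choose (n + 2) = 0 := Nat.choose_eq_zero_of_lt (by omega)
    rw [z] at this
    simp only [Nat.cast_zero, mul_zero, zero_mul, add_zero] at this
    exact this.symm
  rw [t2, ← Finset.sum_add_distrib, tseq_eq y (n + 1) (n + 2) (by omega),
    tseq_eq (y - 1) (n + 1) (n + 2) (by omega), ← Finset.sum_add_distrib, Finset.mul_sum]
  apply Finset.sum_congr rfl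
  intro k _
  have h := ff_R2 y k
  simp only [G]
  linear_combination 2 * ((n + 1).choose k : ℚ_[p]) * 2 ^ k * h

end Rational

section Integral

variable {p : ℕ} [Fact p.Prime]

lemma asc_prod (z : ℤ_[p]) (k : ℕ) :
    (ascPochhammer ℤ_[p] k).eval z = ∏ i ∈ Finset.range k, (z + (i : ℤ_[p])) := by
  induction k with
  | zero => simp
  | succ k ih => rw [ascPochhammer_succ_eval, ih, Finset.prod_range_succ]

lemma gbinom_norm (x : ℤ_[p]) (k : ℕ) : ‖gbinom (x : ℚ_[p]) k‖ ≤ 1 := by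
  have h := PadicInt.norm_ascPochhammer_le k (x - (k : ℤ_[p]) + 1)
  rw [asc_prod] at h
  have e : ∏ i ∈ Finset.range k, ((x : ℚ_[p]) - i) =
      ((∏ i ∈ Finset.range k, (x - (k : ℤ_[p]) + 1 + (i : ℤ_[p])) : ℤ_[p]) : ℚ_[p]) := by
    rw [← Finset.prod_range_reflect]
    refine Eq.trans ?_ (map_prod (PadicInt.Coe.ringHom (p := p)) _ _).symm
    apply Finset.prod_congr rfl
    intro i hi
    have : i + 1 ≤ k := Finset.mem_range.mp hi
    rw [show k - 1 - i = k - (i + 1) by omega, Nat.cast_sub this]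
    change _ = ((x - (k : ℤ_[p]) + 1 + (i : ℤ_[p]) : ℤ_[p]) : ℚ_[p])
    push_cast; ring
  unfold gbinom
  rw [e, norm_div, div_le_one (by simpa using k.factorial_ne_zero)]
  exact_mod_cast h

lemma tseq_norm (x : ℤ_[p]) (n : ℕ) : ‖tseq (x : ℚ_[p]) n‖ ≤ 1 := by
  unfold tseq
  have : ∀ k : ℕ, ∃ z : ℤ_[p], (z : ℚ_[p]) =
      (n.choose k : ℚ_[p]) * gbinom (x : ℚ_[p]) k * gbinom ((x : ℚ_[p]) + (k : ℚ_[p])) k * 2 ^ k := by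
    intro k
    refine ⟨(n.choose k : ℤ_[p]) * ⟨_, gbinom_norm x k⟩ * ⟨_, gbinom_norm (x + (k : ℤ_[p])) k⟩ * 2 ^ k, ?_⟩
    push_cast
    rfl
  choose z hz using this
  have h : ((∑ k ∈ Finset.range (n + 1), z k : ℤ_[p]) : ℚ_[p]) = ∑ k ∈ Finset.range (n+1),
    (n.choose k : ℚ_[p]) * gbinom (x : ℚ_[p]) k * gbinom ((x : ℚ_[p]) + (k : ℚ_[p])) k * 2 ^ k := by
    rw [PadicInt.coe_sum]
    exact Finset.sum_congr rfl fun k _ => hz k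
  rw [← h]
  exact PadicInt.norm_le_one _

/-- Integral version of `tseq`. -/
noncomputable def tz (x : ℤ_[p]) (n : ℕ) : ℤ_[p] := ⟨tseq (x : ℚ_[p]) n, tseq_norm x n⟩

lemma tz_coe (x : ℤ_[p]) (n : ℕ) : ((tz x n : ℤ_[p]) : ℚ_[p]) = tseq (x : ℚ_[p]) n := rfl

lemma tz_zero (x : ℤ_[p]) : tz x 0 = 1 := by
  apply PadicInt.ext; push_cast; rw [tz_coe, tseq_zero]

lemma tz_symm (x : ℤ_[p]) (n : ℕ) : tz (-1 - x) n = tz x n := by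
  apply PadicInt.ext; rw [tz_coe, tz_coe]; push_cast; rw [tseq_symm]

lemma tz_one (y : ℤ_[p]) : tz y 1 - tz (y - 1) 1 = 4 * y := by
  apply PadicInt.ext; push_cast; simp only [tz_coe]; push_cast
  exact_mod_cast tseq_one (y : ℚ_[p])

lemma tz_R1 (y : ℤ_[p]) (n : ℕ) :
    y * (tz y (n + 1) - tz (y - 1) (n + 1)) =
      ((n : ℤ_[p]) + 1) * (tz y (n + 1) + tz (y - 1) (n + 1) - (tz y n + tz (y - 1) n)) := by
  apply PadicInt.ext; push_cast; simp only [tz_coe]; push_cast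
  exact_mod_cast tseq_R1 (y : ℚ_[p]) n

lemma tz_R2 (y : ℤ_[p]) (n : ℕ) :
    ((n : ℤ_[p]) + 2) * (tz y (n + 2) - tz (y - 1) (n + 2))
      - (tz y (n + 1) - tz (y - 1) (n + 1)) - ((n : ℤ_[p]) + 1) * (tz y n - tz (y - 1) n) =
      2 * y * (tz y (n + 1) + tz (y - 1) (n + 1)) := by
  apply PadicInt.ext; push_cast; simp only [tz_coe]; push_cast
  exact_mod_cast tseq_R2 (y : ℚ_[p]) n

/-- The sum under study, divided by 8 and generalized. -/
noncomputable def SS (x : ℤ_[p]) (N : ℕ) : ℤ_[p] :=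
  ∑ n ∈ Finset.range N, (4 * (n : ℤ_[p]) + 3 + 2 * x * (x + 1)) * (tz x n) ^ 2

/-- Telescoping of the difference in `x`. -/
lemma SS_step (y : ℤ_[p]) (N : ℕ) (s e E M : ℤ_[p]) (hM : M = (N : ℤ_[p]) + 1)
    (hs : s = tz y (N + 1) + tz (y - 1) (N + 1)) (he : e = tz y (N + 1) - tz (y - 1) (N + 1))
    (hE : E = tz y N - tz (y - 1) N) :
    4 * (y ^ 2 - 1) * y * (SS y (N + 1) - SS (y - 1) (N + 1)) =
      4 * M ^ 2 * y ^ 2 * s ^ 2 - 4 * M * s * e * (y + y ^ 3 + M * y) - 4 * M ^ 2 * y * s * E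
      + e ^ 2 * (4 * y ^ 2 + 4 * M * y ^ 2 + M ^ 2 * (2 - y ^ 2))
      + M * e * E * (4 * y ^ 4 - M * (4 - 6 * y ^ 2)) + M ^ 2 * E ^ 2 * (2 - y ^ 2) := by
  induction N generalizing s e E M with
  | zero =>
    have h1 := tz_R1 y 0
    have h2 := tz_one y
    simp only [SS, Finset.sum_range_succ, Finset.sum_range_zero, tz_zero, zero_add] at *
    simp only [Nat.cast_zero, zero_add] at *
    subst hM
    rw [← he] at h1 h2
    rw [← hs] at h1
    subst hE
    have h3 : s = 2 + 4 * y ^ 2 := by linear_combination y * h2 - h1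
    rw [h3, h2]
    ring
  | succ N ih =>
    have ih' := ih _ _ _ _ rfl rfl rfl rfl
    have h1 := tz_R1 y (N + 1)
    have h2 := tz_R2 y N
    have hN : ((N : ℤ_[p]) + 2) ≠ 0 := by exact_mod_cast Nat.succ_ne_zero (N + 1)
    unfold SS at ih' ⊢
    rw [Finset.sum_range_succ, Finset.sum_range_succ (n := N + 1)]
    rw [show N + 1 + 1 = N + 2 by ring] at *
    generalize tz y (N + 2) = u2 at *
    generalize tz (y - 1) (N + 2) = t2 at *
    generalize tz y (N + 1) = u1 at *
    generalize tz (y - 1) (N + 1) = t1 at *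
    generalize tz y N = u0 at *
    generalize tz (y - 1) N = t0 at *
    generalize ∑ n ∈ Finset.range (N + 1), (4 * (n : ℤ_[p]) + 3 + 2 * y * (y + 1)) * (tz y n) ^ 2 = A at *
    generalize ∑ n ∈ Finset.range (N + 1), (4 * (n : ℤ_[p]) + 3 + 2 * (y - 1) * (y - 1 + 1)) * (tz (y - 1) n) ^ 2 = B at *
    push_cast at *
    generalize (N : ℤ_[p]) = n at *
    have hX : (n + 2) * s = (n + 2) * (u1 + t1) + y * e := by
      rw [hs, he]; linear_combination -h1
    have hW : (n + 2) * e = (u1 - t1) + (n + 1) * (u0 - t0) + 2 * y * (u1 + t1) := by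
      rw [he]; linear_combination h2
    have hM' : M = n + 2 := by rw [hM]; ring
    clear hM hs he h1 h2 hN ih
    subst hM' hE
    linear_combination ih' - (4 * y ^ 2 * ((n + 2) * s + ((n + 2) * (u1 + t1) + y * e))
      - 4 * e * (y + y ^ 3 + (n + 2) * y) - 4 * (n + 2) * y * (u1 - t1)) * hX
      - ((2 - y ^ 2) * ((n + 2) * e + ((u1 - t1) + (n + 1) * (u0 - t0) + 2 * y * (u1 + t1)))
      + (8 * y ^ 3 * (u1 + t1) - 4 * (u1 + t1) * (y + y ^ 3 + (n + 2) * y) - 4 * y ^ 2 * (u1 - t1)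
        + 4 * y ^ 4 * (u1 - t1) - (n + 2) * (u1 - t1) * (4 - 6 * y ^ 2))) * hW

end Integral

section Congruence

variable {p : ℕ} [Fact p.Prime]

lemma isUnit_nat (n : ℕ) (h0 : 0 < n) (h : n < p) : IsUnit (n : ℤ_[p]) := by
  rw [PadicInt.isUnit_iff]
  by_contra hne
  have h1 : ‖((n : ℤ) : ℤ_[p])‖ < 1 := lt_of_le_of_ne (PadicInt.norm_le_one _) (by exact_mod_cast hne)
  rw [PadicInt.norm_int_lt_one_iff_dvd] at h1
  exact Nat.not_dvd_of_pos_of_lt h0 h (by exact_mod_cast h1)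

lemma isUnit_add (z q : ℤ_[p]) (h : IsUnit z) : IsUnit ((p : ℤ_[p]) * q + z) := by
  rw [PadicInt.isUnit_iff] at *
  by_contra hne
  have h1 : ‖(p : ℤ_[p]) * q + z‖ < 1 := lt_of_le_of_ne (PadicInt.norm_le_one _) hne
  rw [PadicInt.norm_lt_one_iff_dvd] at h1
  have h2 : (p : ℤ_[p]) ∣ z := (dvd_add_right (dvd_mul_right _ _)).mp h1
  rw [← PadicInt.norm_lt_one_iff_dvd] at h2
  linarith

lemma base_aux (q y : ℤ_[p]) (hy : y = (p : ℤ_[p]) * q) (n : ℕ) (hn : n + 1 < p) :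
    (p : ℤ_[p]) ^ 2 ∣ tz y n + tz (y - 1) n - 2 ∧
    (p : ℤ_[p]) ^ 2 ∣ tz y (n + 1) + tz (y - 1) (n + 1) - 2 ∧
    (p : ℤ_[p]) ∣ tz y n - tz (y - 1) n ∧
    (p : ℤ_[p]) ∣ tz y (n + 1) - tz (y - 1) (n + 1) ∧
    (p : ℤ_[p]) ^ 2 ∣ ((n : ℤ_[p]) + 1) * (tz y (n + 1) - tz (y - 1) (n + 1) - (tz y n - tz (y - 1) n))
      - 2 * y * (1 - (-1) ^ (n + 1)) := by
  induction n with
  | zero =>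
    have h1 := tz_R1 y 0
    have h2 := tz_one y
    simp only [tz_zero, zero_add, Nat.cast_zero] at *
    refine ⟨⟨0, by ring⟩, ⟨4 * q ^ 2, ?_⟩, ⟨0, by ring⟩, ⟨4 * q, ?_⟩, ⟨0, ?_⟩⟩
    · rw [h2] at h1
      linear_combination -h1 + 4 * (y + p * q) * hy
    · rw [h2, hy]; ring
    · rw [h2]; ring
  | succ n ih =>
    obtain ⟨-, hs, -, he, hd⟩ := ih (by omega)
    have h1 := tz_R1 y (n + 1)
    have h2 := tz_R2 y n
    have hu : IsUnit ((n : ℤ_[p]) + 2) := by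
      have := isUnit_nat (p := p) (n + 2) (by omega) hn
      exact_mod_cast this
    rw [show n + 1 + 1 = n + 2 by ring] at *
    push_cast at h1 ⊢
    have hd2 : (p : ℤ_[p]) ^ 2 ∣ ((n : ℤ_[p]) + 1 + 1) * (tz y (n + 2) - tz (y - 1) (n + 2)
        - (tz y (n + 1) - tz (y - 1) (n + 1))) - 2 * y * (1 - (-1) ^ (n + 2)) := by
      obtain ⟨a, ha⟩ := hs
      obtain ⟨b, hb⟩ := hd
      refine ⟨-b + 2 * y * a, ?_⟩
      linear_combination h2 - hb + 2 * y * ha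
    have he2 : (p : ℤ_[p]) ∣ tz y (n + 2) - tz (y - 1) (n + 2) := by
      rw [← hu.dvd_mul_left]
      obtain ⟨a, ha⟩ := he
      obtain ⟨b, hb⟩ := hd2
      refine ⟨(n + 2) * a + p * b + 2 * q * (1 - (-1) ^ (n + 2)), ?_⟩
      subst hy
      linear_combination hb + ((n : ℤ_[p]) + 2) * ha
    refine ⟨hs, ?_, he, he2, hd2⟩
    rw [← hu.dvd_mul_left]
    obtain ⟨a, ha⟩ := hs
    obtain ⟨b, hb⟩ := he2
    refine ⟨(n + 2) * a + q * b, ?_⟩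
    subst hy
    linear_combination ((n : ℤ_[p]) + 2) * ha + p * q * hb - h1

lemma base_sum (q y : ℤ_[p]) (hy : y = (p : ℤ_[p]) * q) (n : ℕ) (hn : n < p) :
    (p : ℤ_[p]) ^ 2 ∣ 4 * SS y (n + 1) - 4 * ((2 * ((n : ℤ_[p]) + 1) ^ 2 + ((n : ℤ_[p]) + 1))
        * (1 + (tz y n - tz (y - 1) n)) + 2 * y * ((n : ℤ_[p]) + 1)
        - 2 * y * (((n : ℤ_[p]) + 1) ^ 2 + (-1) ^ (n + 1) * ((n : ℤ_[p]) + 1))) := by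
  induction n with
  | zero =>
    simp only [SS, Finset.sum_range_succ, Finset.sum_range_zero, tz_zero, Nat.cast_zero]
    refine ⟨8 * q ^ 2, ?_⟩
    subst hy
    ring
  | succ n ih =>
    obtain ⟨-, ⟨a, ha⟩, -, ⟨b, hb⟩, ⟨c, hc⟩⟩ := base_aux q y hy n hn
    obtain ⟨d, hd⟩ := ih (by omega)
    have hS : SS y (n + 1 + 1) = SS y (n + 1) +
        (4 * ((n + 1 : ℕ) : ℤ_[p]) + 3 + 2 * y * (y + 1)) * (tz y (n + 1)) ^ 2 := by
      unfold SS; rw [Finset.sum_range_succ]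
    rw [hS]
    push_cast
    generalize tz y (n + 1) = u at *
    generalize tz (y - 1) (n + 1) = t at *
    generalize tz y n - tz (y - 1) n = E at *
    have hu : 4 * u ^ 2 = 4 + 4 * (u - t) + p ^ 2 * (a * (u + t + 2) + 2 * a * (u - t) + b ^ 2) := by
      linear_combination (u + t + 2 + 2 * (u - t)) * ha + (u - t + p * b) * hb
    have hyu : y * (u - t) = p ^ 2 * (q * b) := by
      rw [hb, hy]; ring
    have hyy : y ^ 2 = p ^ 2 * q ^ 2 := by rw [hy]; ring
    generalize SS y (n + 1) = A at *
    generalize (p : ℤ_[p]) ^ 2 = P at *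
    generalize (n : ℤ_[p]) = N at *
    refine ⟨d + (4 * N + 7 + 2 * y * (y + 1)) * (a * (u + t + 2) + 2 * a * (u - t) + b ^ 2) + 8 * q * b
      + 8 * (1 + (u - t)) * q ^ 2 - 4 * (2 * N + 3) * c, ?_⟩
    linear_combination hd + (4 * (N + 1) + 3 + 2 * y * (y + 1)) * hu + 8 * hyu + 8 * (1 + (u - t)) * hyy
      - 4 * (2 * N + 3) * hc

lemma base_final (hp : p ≠ 2) (q : ℤ_[p]) : (p : ℤ_[p]) ^ 2 ∣ SS ((p : ℤ_[p]) * q) p - p := by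
  have hpp : p.Prime := Fact.out
  have h3 : 2 < p := lt_of_le_of_ne hpp.two_le (Ne.symm hp)
  obtain ⟨m, hm⟩ : ∃ m, p = m + 1 + 1 := ⟨p - 2, by omega⟩
  obtain ⟨a, ha⟩ := base_sum q _ rfl (m + 1) (by omega)
  obtain ⟨-, -, -, ⟨b, hb⟩, -⟩ := base_aux q _ rfl m (by omega)
  have hu : IsUnit (4 : ℤ_[p]) := by
    have := isUnit_nat (p := p) 2 (by omega) h3
    have h4 := this.mul this
    norm_num at h4
    exact h4
  have hmp : ((m + 1 : ℕ) : ℤ_[p]) = (p : ℤ_[p]) - 1 := by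
    rw [eq_sub_iff_add_eq]
    exact_mod_cast hm.symm
  rw [← hu.dvd_mul_left]
  rw [hb, hmp, show SS ((p : ℤ_[p]) * q) (m + 1 + 1) = SS ((p : ℤ_[p]) * q) p by rw [← hm]] at ha
  refine ⟨a + 4 * (2 * (1 + p * b) + b + 2 * q - 2 * q * (p + (-1) ^ (m + 1 + 1))), ?_⟩
  linear_combination ha

lemma one_aux (q y : ℤ_[p]) (hy : y = (p : ℤ_[p]) * q + 1) (n : ℕ) (hn : n + 1 < p) :
    (p : ℤ_[p]) ∣ tz y n - tz (y - 1) n - 4 * (n : ℤ_[p]) ∧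
    (p : ℤ_[p]) ∣ tz y (n + 1) - tz (y - 1) (n + 1) - 4 * ((n : ℤ_[p]) + 1) ∧
    (p : ℤ_[p]) ∣ 2 * (tz (y - 1) (n + 1) - 1) := by
  have ht : (p : ℤ_[p]) ∣ 2 * (tz (y - 1) (n + 1) - 1) := by
    obtain ⟨-, ⟨a, ha⟩, -, ⟨b, hb⟩, -⟩ := base_aux q (p * q) rfl n hn
    rw [show y - 1 = p * q by rw [hy]; ring]
    exact ⟨p * a + b, by linear_combination ha + hb⟩
  induction n with
  | zero =>
    have h2 := tz_one y
    simp only [zero_add, tz_zero, Nat.cast_zero] at *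
    exact ⟨⟨0, by ring⟩, ⟨4 * q, by rw [h2, hy]; ring⟩, ht⟩
  | succ n ih =>
    have ht1 : (p : ℤ_[p]) ∣ 2 * (tz (y - 1) (n + 1) - 1) := by
      obtain ⟨-, ⟨a, ha⟩, -, ⟨b, hb⟩, -⟩ := base_aux q (p * q) rfl n (by omega)
      rw [show y - 1 = p * q by rw [hy]; ring]
      exact ⟨p * a + b, by linear_combination ha + hb⟩
    obtain ⟨⟨a, ha⟩, he, -⟩ := ih (by omega) ht1
    refine ⟨by push_cast; exact he, ?_, ht⟩
    have h2 := tz_R2 y n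
    have hu : IsUnit ((n : ℤ_[p]) + 2) := by
      have := isUnit_nat (p := p) (n + 2) (by omega) hn
      exact_mod_cast this
    rw [← hu.dvd_mul_left]
    obtain ⟨b, hb⟩ := he
    obtain ⟨c, hc⟩ := ht1
    rw [show n + 1 + 1 = n + 2 by ring]
    push_cast
    have hy' : y - 1 = p * q := by rw [hy]; ring
    refine ⟨b + (n + 1) * a + 2 * y * (c + b) + 4 * q * (2 * n + 3), ?_⟩
    linear_combination h2 + hb + ((n : ℤ_[p]) + 1) * ha + 2 * y * (hb + hc) + 4 * (2 * n + 3) * hy'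

end Congruence

section Main

variable {p : ℕ} [Fact p.Prime]

lemma chain_step (hp : p ≠ 2) (q : ℤ_[p]) (hq : IsUnit q) (i : ℕ) (hi : i + 2 < p) :
    (p : ℤ_[p]) ^ 2 ∣ SS ((p : ℤ_[p]) * q + ((i + 1 : ℕ) : ℤ_[p])) p - SS ((p : ℤ_[p]) * q + (i : ℤ_[p])) p := by
  have hp0 : (p : ℤ_[p]) ≠ 0 := by exact_mod_cast (Fact.out : p.Prime).ne_zero
  obtain ⟨y, hy⟩ : ∃ y : ℤ_[p], y = (p : ℤ_[p]) * q + ((i + 1 : ℕ) : ℤ_[p]) := ⟨_, rfl⟩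
  have hy1 : (p : ℤ_[p]) * q + (i : ℤ_[p]) = y - 1 := by rw [hy]; push_cast; ring
  have huy : IsUnit y := by rw [hy]; exact isUnit_add _ _ (isUnit_nat _ (by omega) (by omega))
  have huy1 : IsUnit (y + 1) := by
    have := isUnit_add _ q (isUnit_nat (p := p) (i + 2) (by omega) hi)
    convert this using 1
    rw [hy]; push_cast; ring
  have hu4 : IsUnit (4 : ℤ_[p]) := by
    have := isUnit_nat (p := p) 2 (by omega) (by omega)
    have h4 := this.mul this
    norm_num at h4
    exact h4
  rw [hy1, ← hy]
  obtain ⟨m, hm⟩ : ∃ m, p = m + 1 + 1 := ⟨p - 2, by omega⟩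
  have hmp : ((m + 1 : ℕ) : ℤ_[p]) = (p : ℤ_[p]) - 1 := by
    rw [eq_sub_iff_add_eq]
    exact_mod_cast hm.symm
  have hmp' : (m : ℤ_[p]) = (p : ℤ_[p]) - 2 := by
    push_cast at hmp; linear_combination hmp
  have h := SS_step y (m + 1) _ _ _ (p : ℤ_[p]) (by rw [hmp]; ring) rfl rfl rfl
  have h1 := tz_R1 y (m + 1)
  rw [show SS y (m + 1 + 1) = SS y p by rw [← hm], show SS (y - 1) (m + 1 + 1) = SS (y - 1) p by rw [← hm]] at h
  rw [hmp] at h1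
  obtain ⟨w, hw⟩ := huy.exists_right_inv
  generalize hu2 : tz y (m + 1 + 1) = u2 at *
  generalize ht2 : tz (y - 1) (m + 1 + 1) = t2 at *
  generalize hu1 : tz y (m + 1) = u1 at *
  generalize ht1 : tz (y - 1) (m + 1) = t1 at *
  generalize SS y p - SS (y - 1) p = D at *
  obtain ⟨a, ha⟩ : ∃ a, a = w * (u2 + t2 - (u1 + t1)) := ⟨_, rfl⟩
  have hya : y * a = u2 + t2 - (u1 + t1) := by
    rw [ha]; linear_combination (u2 + t2 - (u1 + t1)) * hw
  have hpa : u2 - t2 = p * a := by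
    rw [ha]; linear_combination w * h1 - (u2 - t2) * hw
  obtain ⟨s, hs⟩ : ∃ s, s = u2 + t2 := ⟨_, rfl⟩
  obtain ⟨E, hE⟩ : ∃ E, E = u1 - t1 := ⟨_, rfl⟩
  rw [hpa, ← hs, ← hE] at h
  have h' : 4 * (y + 1) * y * ((y - 1) * D) = (p : ℤ_[p]) ^ 2 * (4 * y ^ 2 * s ^ 2 - 4 * s * a * (y + y ^ 3 + p * y)
      - 4 * y * s * E + a ^ 2 * (4 * y ^ 2 + 4 * p * y ^ 2 + p ^ 2 * (2 - y ^ 2))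
      + a * E * (4 * y ^ 4 - p * (4 - 6 * y ^ 2)) + E ^ 2 * (2 - y ^ 2)) := by
    linear_combination h
  have hU : IsUnit (4 * (y + 1) * y) := (hu4.mul huy1).mul huy
  rcases Nat.eq_zero_or_pos i with hi0 | hi0
  · subst hi0
    have hyq : y - 1 = p * q := by rw [hy]; push_cast; ring
    obtain ⟨-, ⟨b, hb⟩, ⟨c, hc⟩⟩ := one_aux q y (by rw [hy]; push_cast; ring) m (by omega)
    rw [hu1, ht1, hmp'] at hb
    rw [ht1] at hc
    -- `2 (s - a) - E` is divisible by `p`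
    have hz : (p : ℤ_[p]) ∣ 2 * (s - a) - E := by
      refine ⟨2 * q * a + b + 2 * c + 4, ?_⟩
      rw [hs, hE]
      linear_combination 2 * hya.symm + 2 * a * hyq + hb + 2 * hc
    have hmain : (p : ℤ_[p]) ^ 3 ∣ 4 * (y + 1) * y * ((y - 1) * D) := by
      rw [h', pow_succ]
      apply mul_dvd_mul_left
      obtain ⟨z, hz⟩ := hz
      refine ⟨z * (2 * (s - a) - E) + q * (4 * (y + 1) * s ^ 2 - 4 * s * a * (y ^ 2 + y + 2) - 4 * s * E
        + 4 * (y + 1) * a ^ 2 + 4 * a * E * (y ^ 3 + y ^ 2 + y + 1) - (y + 1) * E ^ 2)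
        + (-4 * s * a * y + a ^ 2 * (4 * y ^ 2 + p * (2 - y ^ 2)) - a * E * (4 - 6 * y ^ 2)), ?_⟩
      linear_combination (2 * (s - a) - E) * hz + (4 * (y + 1) * s ^ 2 - 4 * s * a * (y ^ 2 + y + 2) - 4 * s * E
        + 4 * (y + 1) * a ^ 2 + 4 * a * E * (y ^ 3 + y ^ 2 + y + 1) - (y + 1) * E ^ 2) * hyq
    rw [hU.dvd_mul_left, hyq, pow_succ', mul_assoc] at hmain
    have := (mul_dvd_mul_iff_left hp0).mp hmain
    rwa [hq.dvd_mul_left] at this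
  · have huy2 : IsUnit (y - 1) := by
      rw [← hy1]; exact isUnit_add _ _ (isUnit_nat _ hi0 (by omega))
    rw [← huy2.dvd_mul_left, ← hU.dvd_mul_left, h']
    exact dvd_mul_right _ _

lemma chain (hp : p ≠ 2) (q : ℤ_[p]) (hq : IsUnit q) (i : ℕ) (hi : i = 0 ∨ i + 1 < p) :
    (p : ℤ_[p]) ^ 2 ∣ SS ((p : ℤ_[p]) * q + (i : ℤ_[p])) p - p := by
  induction i with
  | zero => simpa using base_final hp q
  | succ i ih =>
    have h1 := ih (by omega)
    have h2 := chain_step hp q hq i (by omega)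
    have := dvd_add h2 h1
    simpa using this

lemma SS_symm (x : ℤ_[p]) (N : ℕ) : SS (-1 - x) N = SS x N := by
  unfold SS
  apply Finset.sum_congr rfl
  intro n _
  rw [tz_symm]; ring

end Main

theorem stmt_18 (p : ℕ) [Fact p.Prime] (hp : p ≠ 2) :
    ‖(∑ n ∈ Finset.range p, (32*(n : ℚ_[p]) + 21) * (tseq (-1/4 : ℚ_[p]) n)^2) - 8*(p : ℚ_[p])‖
      ≤ (p : ℝ) ^ (-2 : ℤ) := by
  have hpp : p.Prime := Fact.out
  have h3 : 2 < p := lt_of_le_of_ne hpp.two_le (Ne.symm hp)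
  have hu4 : IsUnit (4 : ℤ_[p]) := by
    have := isUnit_nat (p := p) 2 (by omega) h3
    have h4 := this.mul this
    norm_num at h4
    exact h4
  obtain ⟨w, hw⟩ := hu4.exists_right_inv
  obtain ⟨q, hq⟩ : ∃ q : ℤ_[p], 4 * q = -1 := ⟨-w, by linear_combination -hw⟩
  have huq : IsUnit q := IsUnit.of_mul_eq_one (-4) (by linear_combination -hq)
  have hcq : (q : ℚ_[p]) = -1 / 4 := by
    have : (4 : ℚ_[p]) * (q : ℚ_[p]) = -1 := by exact_mod_cast congrArg (fun z : ℤ_[p] => (z : ℚ_[p])) hq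
    field_simp
    linear_combination this
  have hodd : p % 2 = 1 := hpp.eq_two_or_odd.resolve_left hp
  have key : (p : ℤ_[p]) ^ 2 ∣ SS q p - p := by
    have hmod : p % 4 = 1 ∨ p % 4 = 3 := by omega
    rcases hmod with hm | hm
    · obtain ⟨a, ha⟩ : ∃ a, p = 4 * a + 1 := ⟨p / 4, by omega⟩
      have hc : (p : ℤ_[p]) = 4 * (a : ℤ_[p]) + 1 := by exact_mod_cast congrArg (fun z : ℕ => (z : ℤ_[p])) ha
      have := chain hp q huq a (by omega)
      rwa [show (p : ℤ_[p]) * q + (a : ℤ_[p]) = q by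
        linear_combination q * hc + (a : ℤ_[p]) * hq] at this
    · obtain ⟨a, ha⟩ : ∃ a, p = 4 * a + 3 := ⟨p / 4, by omega⟩
      have hc : (p : ℤ_[p]) = 4 * (a : ℤ_[p]) + 3 := by exact_mod_cast congrArg (fun z : ℕ => (z : ℤ_[p])) ha
      have := chain hp q huq a (by omega)
      rwa [show (p : ℤ_[p]) * q + (a : ℤ_[p]) = -1 - q by
        linear_combination q * hc + ((a : ℤ_[p]) + 1) * hq, SS_symm] at this
  have h8 : (∑ n ∈ Finset.range p, (32*(n : ℚ_[p]) + 21) * (tseq (-1/4 : ℚ_[p]) n)^2) - 8*(p : ℚ_[p])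
      = ((8 * (SS q p - (p : ℤ_[p])) : ℤ_[p]) : ℚ_[p]) := by
    have hS : ((SS q p : ℤ_[p]) : ℚ_[p]) =
        ∑ n ∈ Finset.range p, (4 * (n : ℚ_[p]) + 3 + 2 * (q : ℚ_[p]) * ((q : ℚ_[p]) + 1)) * (tseq (q : ℚ_[p]) n) ^ 2 := by
      unfold SS
      rw [PadicInt.coe_sum]
      apply Finset.sum_congr rfl
      intro n _
      rw [← tz_coe]
      norm_cast
    have e8 : ((8 : ℤ_[p]) : ℚ_[p]) = 8 := rfl
    rw [PadicInt.coe_mul, PadicInt.coe_sub, hS, PadicInt.coe_natCast, e8, mul_sub, Finset.mul_sum]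
    congr 1
    apply Finset.sum_congr rfl
    intro n _
    rw [hcq]
    ring
  rw [h8, PadicInt.padic_norm_e_of_padicInt]
  have := (PadicInt.norm_le_pow_iff_mem_span_pow (8 * (SS q p - (p : ℤ_[p]))) 2).mpr
    (Ideal.mem_span_singleton.mpr (dvd_mul_of_dvd_right key 8))
  exact_mod_cast this
end

section
/- Define t_n(x) = Σ_{k=0}^n C(n,k)*C(x,k)*C(x+k,k)*2^k. For any prime p > 3, taking x = −1/3 in Z_p, one has Σ_{n=0}^{p-1} (18n+7)·t_n(−1/3)^2 ≡ 0 (mod p^2); and taking x = −1/6 in Z_p, one has Σ_{n=0}^{p-1} (72n+49)·t_n(−1/6)^2 ≡ 18p (mod p^2). -/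
open Polynomial in
/-- Integral of a real polynomial over `[0,1]`. -/
noncomputable def JJ (f : ℝ[X]) : ℝ := ∫ y in (0:ℝ)..1, f.eval y

section part1
open Polynomial

theorem JJ_add (f g : ℝ[X]) : JJ (f + g) = JJ f + JJ g := by
  unfold JJ
  simp only [eval_add]
  exact intervalIntegral.integral_add (f.continuous.intervalIntegrable _ _)
    (g.continuous.intervalIntegrable _ _)

theorem JJ_smul (c : ℝ) (f : ℝ[X]) : JJ (C c * f) = c * JJ f := by
  unfold JJ
  simp only [eval_mul, eval_C]
  exact intervalIntegral.integral_const_mul _ _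

theorem JJ_neg (f : ℝ[X]) : JJ (-f) = - JJ f := by
  have := JJ_smul (-1) f
  simpa using this

theorem JJ_sub (f g : ℝ[X]) : JJ (f - g) = JJ f - JJ g := by
  rw [sub_eq_add_neg, JJ_add, JJ_neg]; ring

theorem JJ_zero : JJ 0 = 0 := by simp [JJ]

theorem JJ_sum {ι : Type*} (s : Finset ι) (f : ι → ℝ[X]) :
    JJ (∑ i ∈ s, f i) = ∑ i ∈ s, JJ (f i) := by
  classical
  induction s using Finset.induction_on with
  | empty => simp [JJ_zero]
  | insert a s ha ih => rw [Finset.sum_insert ha, Finset.sum_insert ha, JJ_add, ih]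

theorem JJ_deriv (f : ℝ[X]) : JJ (derivative f) = f.eval 1 - f.eval 0 := by
  unfold JJ
  exact intervalIntegral.integral_eq_sub_of_hasDerivAt (fun x _ => f.hasDerivAt x)
    ((derivative f).continuous.intervalIntegrable _ _)

theorem JJ_flip (f : ℝ[X]) : JJ (f.comp (1 - X)) = JJ f := by
  unfold JJ
  have := intervalIntegral.integral_comp_sub_left (a := 0) (b := 1) (fun x => f.eval x) (1:ℝ)
  simpa using this

theorem JJ_half (f : ℝ[X]) :
    JJ f = (1/2) * JJ ((f + f.comp (1 - X)).comp (C (1/2) * X)) := by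
  have h1 := intervalIntegral.mul_integral_comp_mul_left (a := 0) (b := 1)
    (f := fun x => (f + f.comp (1 - X)).eval x) (c := (1/2:ℝ))
  have h2 : ∀ g : ℝ[X], ∀ a b : ℝ, IntervalIntegrable (fun x => g.eval x) MeasureTheory.volume a b :=
    fun g a b => g.continuous.intervalIntegrable _ _
  have h3 := intervalIntegral.integral_comp_sub_left (a := 0) (b := 1/2) (fun x => f.eval x) (1:ℝ)
  have h4 := intervalIntegral.integral_add_adjacent_intervals (h2 f 0 (1/2)) (h2 f (1/2) 1)
  have h5 := intervalIntegral.integral_add (h2 f 0 (1/2)) (h2 (f.comp (1-X)) 0 (1/2))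
  unfold JJ
  simp only [eval_comp, eval_add, eval_mul, eval_C, eval_X, eval_sub, eval_one] at *
  rw [h1, mul_zero, mul_one, h5, h3, ← h4]
  norm_num

theorem JJ_X_pow (m : ℕ) : JJ (X ^ m) = 1 / (m + 1) := by
  simp [JJ]

theorem JJ_beta (k : ℕ) : ∀ l : ℕ, JJ (X ^ k * (1 - X) ^ l) =
    (k.factorial * l.factorial : ℝ) / (k + l + 1).factorial := by
  induction k with
  | zero =>
    intro l
    have h := JJ_flip (X ^ l)
    rw [JJ_X_pow] at h
    have h' : (X ^ 0 * (1 - X) ^ l : ℝ[X]) = (X ^ l).comp (1 - X) := by simp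
    rw [h', h]
    have := Nat.factorial_ne_zero l
    rw [zero_add, Nat.factorial_succ]; push_cast; field_simp; simp
  | succ k ih =>
    intro l
    have h1 := JJ_deriv (X ^ (k+1) * (1 - X) ^ (l+1))
    have h2 : derivative (X ^ (k+1) * (1 - X) ^ (l+1) : ℝ[X]) =
        C ((k:ℝ)+1) * (X ^ k * (1 - X) ^ (l+1)) - C ((l:ℝ)+1) * (X ^ (k+1) * (1-X)^l) := by
      simp [derivative_mul, derivative_pow]; ring
    rw [h2, JJ_sub, JJ_smul, JJ_smul, ih] at h1
    simp at h1
    have h3 : ((l:ℝ)+1) ≠ 0 := by positivity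
    have : JJ (X ^ (k+1) * (1-X)^l) = ((k:ℝ)+1) / ((l:ℝ)+1) * ((k.factorial * (l+1).factorial : ℝ) / (k + (l+1) + 1).factorial) := by
      rw [div_mul_eq_mul_div, eq_div_iff h3]; linarith
    rw [this, show k + (l+1)+1 = k+1+l+1 by ring, Nat.factorial_succ l, Nat.factorial_succ k]
    push_cast
    field_simp

/-- shifted Legendre over the reals -/
noncomputable def qL (m : ℕ) : ℝ[X] := (shiftedLegendre m).map (Int.castRingHom ℝ)

theorem qL_coeff (m k : ℕ) : (qL m).coeff k = (-1)^k * m.choose k * (m+k).choose k := by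
  rw [qL, coeff_map, coeff_shiftedLegendre]
  rw [Nat.choose_symm_add]; simp

theorem qL_natDegree_le (m : ℕ) : (qL m).natDegree ≤ m := by
  rw [natDegree_le_iff_coeff_eq_zero]
  intro N hN
  rw [qL_coeff, Nat.choose_eq_zero_of_lt hN]; simp

theorem qL_rec (m k : ℕ) : ((k:ℝ)+1)^2 * (qL m).coeff (k+1) =
    ((k:ℝ)*(k+1) - m*(m+1)) * (qL m).coeff k := by
  rw [qL_coeff, qL_coeff]
  have h1 : ((m.choose (k+1) : ℝ)) * (k+1) = m.choose k * (m - k) := by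
    rcases le_or_gt k m with h | h
    · have := Nat.choose_succ_right_eq m k
      rw [← Nat.cast_sub h]; exact_mod_cast this
    · rw [Nat.choose_eq_zero_of_lt h, Nat.choose_eq_zero_of_lt (by omega)]; simp
  have h2 : (((m+(k+1)).choose (k+1) : ℝ)) * (k+1) = (m+k+1) * (m+k).choose k := by
    have := Nat.add_one_mul_choose_eq (m+k) k
    exact_mod_cast this.symm
  linear_combination (-1:ℝ)^(k+1) * ((((m+(k+1)).choose (k+1) : ℝ)) * (k+1)) * h1
    + (-1:ℝ)^(k+1) * (m.choose k * (m - k)) * h2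

theorem qL_ode (m : ℕ) : derivative (X * (1 - X) * derivative (qL m)) = - C ((m:ℝ)*(m+1)) * qL m := by
  ext k
  have h : X * (1 - X) * derivative (qL m) = (X * derivative (qL m)) - X * (X * derivative (qL m)) := by ring
  rw [h, coeff_derivative, coeff_sub, coeff_X_mul, coeff_X_mul, coeff_derivative, neg_mul, coeff_neg,
    coeff_C_mul]
  have := qL_rec m k
  rcases k with _ | k
  · simp at this ⊢; linarith
  · rw [coeff_X_mul, coeff_derivative]
    push_cast at this ⊢
    linear_combination this

theorem qL_zero (m : ℕ) : (qL m).eval 0 = 1 := by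
  rw [← coeff_zero_eq_eval_zero, qL_coeff]; simp

theorem qL_symm (m : ℕ) (x : ℝ) : (qL m).eval x = (-1)^m * (qL m).eval (1-x) := by
  have := shiftedLegendre_eval_symm m x
  simpa [qL, eval_map, aeval_def] using this

theorem qL_one (m : ℕ) : (qL m).eval 1 = (-1)^m := by
  rw [qL_symm]; simp [qL_zero]

theorem qL_mom (m j : ℕ) (h : j < m) : JJ (X ^ j * qL m) = 0 := by
  have key : ∀ j : ℕ, ((m:ℝ)*(m+1) - j*(j+1)) * JJ (X^j * qL m) = - (j:ℝ)^2 * JJ (X^(j-1) * qL m) := by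
    intro j
    have h1 := JJ_deriv (X^j * (X * (1-X) * derivative (qL m)) - C (j:ℝ) * (X^j * (1-X) * qL m))
    have h2 : derivative (X^j * (X * (1-X) * derivative (qL m)) - C (j:ℝ) * (X^j * (1-X) * qL m))
      = C (-((m:ℝ)*(m+1) - j*(j+1))) * (X^j * qL m) + C (-(j:ℝ)^2) * (X^(j-1) * qL m) := by
      rw [derivative_sub, derivative_mul, qL_ode]
      rcases j with _ | j
      · simp
      · simp; ring
    rw [h2, JJ_add, JJ_smul, JJ_smul] at h1
    rcases j with _ | j
    · simp at h1 ⊢; 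
      rcases h1 with h1 | h1
      · left; exact_mod_cast h1
      · right; exact h1
    · simp at h1 ⊢; linarith
  induction j with
  | zero =>
    have := key 0
    simp at this
    rcases this with h' | h'
    · exfalso; have : (0:ℝ) < m := by exact_mod_cast h
      rcases h' with h' | h'
      · subst h'; simp at h
      · linarith
    · simpa using h'
  | succ j ih =>
    have h3 := key (j+1)
    simp only [Nat.add_sub_cancel] at h3
    rw [ih (by omega), mul_zero] at h3
    rcases mul_eq_zero.1 h3 with h4 | h4
    · exfalso
      have : ((j+1:ℕ):ℝ) < m := by exact_mod_cast h
      have h0 : (0:ℝ) ≤ ((j+1:ℕ):ℝ) := by positivity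
      nlinarith
    · exact h4

theorem qL_orth (m : ℕ) (g : ℝ[X]) (hg : ∀ k, m ≤ k → g.coeff k = 0) : JJ (qL m * g) = 0 := by
  rw [g.as_sum_range_C_mul_X_pow, Finset.mul_sum, JJ_sum]
  apply Finset.sum_eq_zero
  intro k hk
  rw [show qL m * (C (g.coeff k) * X ^ k) = C (g.coeff k) * (X ^ k * qL m) by ring, JJ_smul]
  rcases lt_or_ge k m with h | h
  · rw [qL_mom m k h, mul_zero]
  · rw [hg k h, zero_mul]

theorem qL_norm (m : ℕ) : JJ (qL m * qL m) = 1 / (2*m+1) := by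
  have h1 := JJ_deriv (X * qL m * qL m)
  have h2 : JJ (qL m * (X * derivative (qL m) - C (m:ℝ) * qL m)) = 0 := by
    apply qL_orth
    intro k hk
    rcases k with _ | k
    · have : m = 0 := by omega
      subst this; simp
    · rw [coeff_sub, coeff_X_mul, coeff_derivative, coeff_C_mul]
      rcases hk.eq_or_lt with h | h
      · rw [h]; push_cast; ring
      · rw [coeff_eq_zero_of_natDegree_lt (lt_of_le_of_lt (qL_natDegree_le m) h)]; ring
  have h3 : derivative (X * qL m * qL m) = C ((2:ℝ)*m+1) * (qL m * qL m) + C (2:ℝ) * (qL m * (X * derivative (qL m) - C (m:ℝ) * qL m)) := by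
    rw [C_add, C_mul, map_ofNat C 2]; simp [derivative_mul]; ring
  rw [h3, JJ_add, JJ_smul, JJ_smul, h2] at h1
  simp [qL_one, ← mul_pow] at h1
  field_simp
  linarith

noncomputable def rL (m : ℕ) : ℝ[X] := (qL m).comp (2 - X)

theorem rL_eq (m : ℕ) : rL m = C ((-1:ℝ)^m) * (qL m).comp (X - C 1) := by
  apply Polynomial.funext
  intro x
  simp only [rL, eval_comp, eval_mul, eval_C, eval_sub, eval_X, eval_ofNat]
  rw [qL_symm]; congr 2; ring

theorem rL_coeff_top (m : ℕ) : (rL m).coeff m = (-1)^m * (qL m).coeff m := by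
  rw [rL_eq, coeff_C_mul]
  congr 1
  have h1 : ((qL m).comp (X - C 1)).natDegree = (qL m).natDegree := by rw [natDegree_comp, natDegree_X_sub_C, mul_one]
  have hd : (qL m).natDegree = m := by
    apply le_antisymm (qL_natDegree_le m)
    apply le_natDegree_of_ne_zero
    rw [qL_coeff]
    have := (Nat.choose_pos (show m ≤ m + m by omega)).ne'
    simp [this]
  have h2 : ((qL m).comp (X - C 1)).leadingCoeff = (qL m).leadingCoeff := by
    rw [leadingCoeff_comp (by rw [natDegree_X_sub_C]; exact one_ne_zero)]
    rw [leadingCoeff_X_sub_C]; simp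
  rw [leadingCoeff, leadingCoeff, h1, hd] at h2
  exact h2

theorem rL_natDegree (m : ℕ) : (rL m).natDegree ≤ m := by
  rw [rL_eq]
  refine (natDegree_C_mul_le _ _).trans ?_
  rw [natDegree_comp, natDegree_X_sub_C, mul_one]
  exact qL_natDegree_le m

theorem qr_int (m : ℕ) : JJ (qL m * rL m) = (-1)^m / (2*m+1) := by
  have h : JJ (qL m * (rL m - C ((-1:ℝ)^m) * qL m)) = 0 := by
    apply qL_orth
    intro k hk
    rw [coeff_sub, coeff_C_mul]
    rcases hk.eq_or_lt with h | h
    · rw [← h, rL_coeff_top]; ring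
    · rw [coeff_eq_zero_of_natDegree_lt (lt_of_le_of_lt (qL_natDegree_le m) h),
        coeff_eq_zero_of_natDegree_lt (lt_of_le_of_lt (rL_natDegree m) h)]; ring
  rw [show qL m * (rL m - C ((-1:ℝ)^m) * qL m) = qL m * rL m - C ((-1:ℝ)^m) * (qL m * qL m) by ring,
    JJ_sub, JJ_smul, qL_norm] at h
  rw [div_eq_mul_one_div]; linarith

theorem rL_ode (m : ℕ) : derivative ((2 - X) * (1 - X) * derivative (rL m)) = C ((m:ℝ)*(m+1)) * rL m := by
  have h := congrArg (fun f => f.comp (2 - X)) (qL_ode m)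
  have h1 : derivative (rL m) = - (derivative (qL m)).comp (2 - X) := by
    rw [rL, derivative_comp]; simp
  have h2 : (2 - X) * (1 - X) * derivative (rL m) = (X * (1 - X) * derivative (qL m)).comp (2 - X) := by
    rw [h1]; simp; ring
  rw [h2, derivative_comp]
  rw [h]
  simp [rL]

theorem B_int (m : ℕ) : JJ (C (2*((m:ℝ)*(m+1))+1) * (qL m * rL m)
    + X * (2 - X) * (derivative (qL m) * rL m - qL m * derivative (rL m))) = 1 := by
  have ho : JJ (qL m * derivative (rL m)) = 0 := by
    apply qL_orth
    intro k hk
    rw [coeff_derivative, coeff_eq_zero_of_natDegree_lt (lt_of_le_of_lt (rL_natDegree m) (by omega)), zero_mul]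
  have hq := qL_ode m
  have hr := rL_ode m
  set q := qL m
  set r := rL m with hrd
  set q' := derivative q with hq'
  set r' := derivative r with hr'
  set U := C ((m:ℝ)*(m+1)) with hU
  have hC : C (2*((m:ℝ)*(m+1))+1) = 2 * U + 1 := by rw [hU, C_add, C_mul, map_ofNat C 2]; simp
  have e1 : derivative (X * (1 - X) * q' * ((2 - X) * r)) = (-U * q) * ((2-X) * r) + X * (1-X)*q' * (-r + (2-X)*r') := by
    rw [derivative_mul, hq, derivative_mul, ← hr']; simp
  have e2 : derivative ((2 - X) * (1 - X) * r' * (X * q)) = (U * r) * (X * q) + (2 - X) * (1-X)*r' * (q + X*q') := by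
    rw [derivative_mul, hr, derivative_mul, ← hq']; simp
  have e3 : derivative ((X * (2 - X) - X * (1-X)) * (q * r)) = q * r + X * (q' * r + q * r') := by
    rw [show (X * (2 - X) - X * (1-X) : ℝ[X]) = X by ring, derivative_mul, derivative_mul, ← hq', ← hr']
    simp
  have key := JJ_deriv ((X * (2 - X) - X * (1-X)) * (q * r) + (2 - X) * (1 - X) * r' * (X * q)
      - X * (1 - X) * q' * ((2 - X) * r))
  rw [derivative_sub, derivative_add, e1, e2, e3] at key
  have e4 : C (2*((m:ℝ)*(m+1))+1) * (q * r) + X * (2 - X) * (q' * r - q * r') =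
    (q * r + X * (q' * r + q * r') + ((U * r) * (X * q) + (2 - X) * (1-X)*r' * (q + X*q'))
      - ((-U * q) * ((2-X) * r) + X * (1-X)*q' * (-r + (2-X)*r'))) - C 2 * (q * r') := by
    rw [hC, show (C 2 : ℝ[X]) = 2 from rfl]; ring
  rw [e4, JJ_sub, JJ_smul, ho, key]
  have : r.eval 1 = q.eval 1 := by rw [hrd, rL, eval_comp]; congr 1; simp; norm_num
  simp [this]
  have h1 : q.eval 1 = (-1)^m := qL_one m
  rw [h1, ← mul_pow]; norm_num

end part1

/-- the coefficients of `t_n(m)` at a natural number `m` -/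
def cc (m k : ℕ) : ℕ := m.choose k * (m + k).choose k * 2 ^ k

/-- the coefficients of `n t_n(m)` in the binomial basis -/
def dd (m l : ℕ) : ℕ := l * (cc m (l - 1) + cc m l)

/-- signed Beta values -/
def MM (K : Type*) [Field K] (k l : ℕ) : K :=
  (-1) ^ (k + l) * (k.factorial * l.factorial) / (k + l + 1).factorial

section part2
open Polynomial

theorem JJ_double (c d : ℕ → ℝ) (N N' : ℕ) :
    JJ ((∑ l ∈ Finset.range N', C (d l) * (-X) ^ l) *
      (∑ k ∈ Finset.range N, C (c k) * (-X) ^ k).comp (1 - X)) =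
    ∑ k ∈ Finset.range N, ∑ l ∈ Finset.range N', c k * d l * MM ℝ k l := by
  rw [Polynomial.sum_comp, Finset.mul_sum, JJ_sum]
  apply Finset.sum_congr rfl
  intro k _
  rw [Finset.sum_mul, JJ_sum]
  apply Finset.sum_congr rfl
  intro l _
  have : (C (d l) * (-X) ^ l * (C (c k) * (-X) ^ k).comp (1 - X) : ℝ[X]) =
      C (c k * d l * (-1)^(k+l)) * (X ^ l * (1-X)^k) := by
    simp only [mul_comp, C_comp, pow_comp, neg_comp, X_comp, C_mul]
    rw [neg_pow (X : ℝ[X]), neg_pow (1 - X : ℝ[X])]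
    simp only [pow_add, C_pow, C_neg, C_mul, map_one]
    ring
  rw [this, JJ_smul, JJ_beta, MM, show l + k + 1 = k + l + 1 by ring]
  ring

noncomputable def QL (m : ℕ) : ℝ[X] := (qL m).comp (C 2 * X)

theorem QL_eq (m N : ℕ) (h : m < N) :
    ∑ k ∈ Finset.range N, C (cc m k : ℝ) * (-X) ^ k = QL m := by
  rw [QL]
  conv_rhs => rw [(qL m).as_sum_range' N (lt_of_le_of_lt (qL_natDegree_le m) h)]
  rw [Polynomial.sum_comp]
  apply Finset.sum_congr rfl
  intro k _
  rw [monomial_comp, qL_coeff, neg_pow, mul_pow, cc]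
  push_cast
  simp only [C_mul, C_pow, C_neg, map_one]
  ring

theorem XQ_eq (m N : ℕ) (h : m < N) :
    ∑ k ∈ Finset.range N, C (k * cc m k : ℝ) * (-X) ^ k = X * derivative (QL m) := by
  rw [← QL_eq m N h, derivative_sum, Finset.mul_sum]
  apply Finset.sum_congr rfl
  intro k _
  rcases k with _ | k
  · simp
  · rw [derivative_C_mul, derivative_pow_succ]; simp; ring

theorem DQ_eq (m N : ℕ) (h : m < N) :
    ∑ l ∈ Finset.range (N+1), C (dd m l : ℝ) * (-X) ^ l =
      X * (1 - X) * derivative (QL m) - X * QL m := by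
  have h1 : ∀ l, C (dd m l : ℝ) * (-X) ^ l = C (l * cc m l : ℝ) * (-X)^l + C ((l:ℝ) * cc m (l-1)) * (-X)^l := by
    intro l; rw [dd, ← add_mul, ← C_add]; congr 2; push_cast; ring
  rw [Finset.sum_congr rfl (fun l _ => h1 l), Finset.sum_add_distrib, XQ_eq m _ (by omega),
    Finset.sum_range_succ']
  have h2 : ∀ k, C (((k+1:ℕ):ℝ) * cc m (k+1-1)) * (-X)^(k+1) =
      -X * (C (k * cc m k : ℝ) * (-X) ^ k + C (cc m k : ℝ) * (-X) ^ k) := by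
    intro k
    rw [← add_mul, ← C_add, Nat.add_sub_cancel]; push_cast
    rw [pow_succ, show (((k:ℝ)+1) * cc m k) = k * cc m k + cc m k by ring]; ring
  rw [Finset.sum_congr rfl (fun l _ => h2 l), ← Finset.mul_sum, Finset.sum_add_distrib, XQ_eq m _ h, QL_eq m _ h]
  simp; ring

theorem sumA_real (m N : ℕ) (h : m < N) :
    ∑ k ∈ Finset.range N, ∑ l ∈ Finset.range (N+1), (cc m k : ℝ) * cc m l * MM ℝ k l =
      (-1)^m / (2*m+1) := by
  rw [← JJ_double (fun k => (cc m k : ℝ)) (fun k => (cc m k : ℝ)), QL_eq m N h, QL_eq m (N+1) (by omega),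
    JJ_half, ← qr_int, ← JJ_smul]
  congr 1
  apply Polynomial.funext
  intro x
  simp only [QL, rL, eval_comp, eval_mul, eval_C, eval_sub, eval_X, eval_ofNat, eval_add, eval_one]
  rw [show 2 * (1/2*x) = x by ring, show 2 * (1 - 1/2*x) = 2 - x by ring,
    show 2 * (1 - (1 - 1/2*x)) = x by ring]
  ring

theorem sumB_real (m N : ℕ) (h : m < N) :
    ∑ k ∈ Finset.range N, ∑ l ∈ Finset.range (N+1),
      (cc m k : ℝ) * ((2*(m*(m+1))+3) * cc m l + 4 * dd m l) * MM ℝ k l = 1 := by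
  rw [← JJ_double (fun k => (cc m k : ℝ)) (fun l => ((2*((m:ℝ)*(m+1))+3) * cc m l + 4 * dd m l)), QL_eq m N h]
  have h1 : ∑ l ∈ Finset.range (N+1), C ((2*((m:ℝ)*(m+1))+3) * cc m l + 4 * dd m l) * (-X) ^ l =
      C (2*((m:ℝ)*(m+1))+3) * QL m + C 4 * (X * (1 - X) * derivative (QL m) - X * QL m) := by
    rw [← DQ_eq m N h, ← QL_eq m (N+1) (by omega), Finset.mul_sum, Finset.mul_sum, ← Finset.sum_add_distrib]
    apply Finset.sum_congr rfl
    intro l _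
    rw [C_add, C_mul, C_mul]; ring
  rw [h1, JJ_half, ← JJ_smul]
  refine Eq.trans ?_ (B_int m)
  congr 1
  apply Polynomial.funext
  intro x
  simp only [QL, rL, derivative_comp, eval_comp, eval_mul, eval_C, eval_sub, eval_X, eval_ofNat, eval_add, eval_one,
    derivative_mul, derivative_sub, derivative_X, derivative_C, eval_zero, derivative_ofNat]
  rw [show 2 * (1/2*x) = x by ring, show 2 * (1 - 1/2*x) = 2 - x by ring,
    show 2 * (1 - (1 - 1/2*x)) = x by ring]
  ring

theorem sumA_rat (m N : ℕ) (h : m < N) :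
    ∑ k ∈ Finset.range N, ∑ l ∈ Finset.range (N+1), (cc m k : ℚ) * cc m l * MM ℚ k l =
      (-1)^m / (2*m+1) := by
  have := sumA_real m N h
  unfold MM at *
  exact_mod_cast this

theorem sumB_rat (m N : ℕ) (h : m < N) :
    ∑ k ∈ Finset.range N, ∑ l ∈ Finset.range (N+1),
      (cc m k : ℚ) * ((2*(m*(m+1))+3) * cc m l + 4 * dd m l) * MM ℚ k l = 1 := by
  have := sumB_real m N h
  unfold MM at *
  exact_mod_cast this

theorem sumA_field (K : Type*) [Field K] [CharZero K] (m N : ℕ) (h : m < N) :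
    ∑ k ∈ Finset.range N, ∑ l ∈ Finset.range (N+1), (cc m k : K) * cc m l * MM K k l =
      (-1)^m / (2*m+1) := by
  have := congrArg (Rat.cast : ℚ → K) (sumA_rat m N h)
  unfold MM at *
  push_cast at this
  exact this

theorem sumB_field (K : Type*) [Field K] [CharZero K] (m N : ℕ) (h : m < N) :
    ∑ k ∈ Finset.range N, ∑ l ∈ Finset.range (N+1),
      (cc m k : K) * ((2*(m*(m+1))+3) * cc m l + 4 * dd m l) * MM K k l = 1 := by
  have := congrArg (Rat.cast : ℚ → K) (sumB_rat m N h)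
  unfold MM at *
  push_cast at this
  exact this

end part2

section part3
variable {p : ℕ} [Fact p.Prime]

/-- `x ∈ p^r Z_p` -/
def EE (r : ℕ) (x : ℚ_[p]) : Prop := ‖x‖ ≤ (p : ℝ) ^ (-(r : ℤ))

theorem p_pos_real (p : ℕ) [Fact p.Prime] : (0:ℝ) < p := by
  exact_mod_cast (Fact.out : p.Prime).pos

theorem EE_add {r : ℕ} {x y : ℚ_[p]} (hx : EE r x) (hy : EE r y) : EE r (x + y) :=
  (Padic.nonarchimedean x y).trans (max_le hx hy)

theorem EE_neg {r : ℕ} {x : ℚ_[p]} (hx : EE r x) : EE r (-x) := by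
  unfold EE; rw [norm_neg]; exact hx

theorem EE_sub {r : ℕ} {x y : ℚ_[p]} (hx : EE r x) (hy : EE r y) : EE r (x - y) := by
  rw [sub_eq_add_neg]; exact EE_add hx (EE_neg hy)

theorem EE_mul {r s : ℕ} {x y : ℚ_[p]} (hx : EE r x) (hy : EE s y) : EE (r + s) (x * y) := by
  unfold EE at *
  rw [norm_mul, Nat.cast_add, neg_add, zpow_add₀ (p_pos_real p).ne']
  exact mul_le_mul hx hy (norm_nonneg _) (by have := p_pos_real p; positivity)

theorem EE_zero {r : ℕ} : EE r (0 : ℚ_[p]) := by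
  unfold EE; rw [norm_zero]; have := p_pos_real p; positivity

theorem EE_mono {r s : ℕ} (h : r ≤ s) {x : ℚ_[p]} (hx : EE s x) : EE r x := by
  refine le_trans hx ?_
  apply zpow_le_zpow_right₀
  · exact_mod_cast (Fact.out : p.Prime).one_lt.le
  · omega

theorem EE_sum {r : ℕ} {ι : Type*} (s : Finset ι) (f : ι → ℚ_[p]) (h : ∀ i ∈ s, EE r (f i)) :
    EE r (∑ i ∈ s, f i) := by
  classical
  induction s using Finset.induction_on with
  | empty => simpa using EE_zero
  | insert a s ha ih =>
    rw [Finset.sum_insert ha]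
    exact EE_add (h _ (Finset.mem_insert_self _ _)) (ih fun i hi => h i (Finset.mem_insert_of_mem hi))

theorem EE_int (n : ℤ) : EE 0 (n : ℚ_[p]) := by
  unfold EE; simpa using Padic.norm_int_le_one n

theorem EE_nat (n : ℕ) : EE 0 (n : ℚ_[p]) := by
  have := EE_int (p := p) n; simpa using this

theorem EE_p : EE 1 (p : ℚ_[p]) := by
  unfold EE; rw [Padic.norm_p]; simp

theorem EE_dvd {n : ℕ} (h : p ∣ n) : EE 1 (n : ℚ_[p]) := by
  obtain ⟨k, rfl⟩ := h
  push_cast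
  exact EE_mul EE_p (EE_nat k)

theorem EE_cancel {r : ℕ} {n : ℕ} (hn : ¬ p ∣ n) {x : ℚ_[p]} (h : EE r ((n : ℚ_[p]) * x)) : EE r x := by
  have h1 : ‖(n : ℚ_[p])‖ = 1 := by
    apply le_antisymm
    · simpa [EE] using EE_nat (p := p) n
    · by_contra hlt
      push Not at hlt
      have := (Padic.norm_intCast_lt_one_iff (p := p) (k := (n : ℤ))).1 (by simpa using hlt)
      exact hn (by exact_mod_cast this)
  unfold EE at *
  rwa [norm_mul, h1, one_mul] at h

theorem EE_cmul {r : ℕ} {x y : ℚ_[p]} (hx : EE 0 x) (hy : EE r y) : EE r (x * y) := by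
  have := EE_mul hx hy; rwa [zero_add] at this

/-- power sums of products of binomials -/
noncomputable def WW (p : ℕ) [Fact p.Prime] (k l : ℕ) : ℚ_[p] :=
  ∑ n ∈ Finset.range p, (n.choose k : ℚ_[p]) * n.choose l

noncomputable def err (p : ℕ) [Fact p.Prime] (k l : ℕ) : ℚ_[p] :=
  WW p k l - p * MM ℚ_[p] k l

theorem choose_step {K : Type*} [Field K] (n k : ℕ) :
    (n.choose (k+1) : K) * (k+1) + k * n.choose k = n * n.choose k := by
  rcases le_or_gt k n with h | h
  · have := Nat.choose_succ_right_eq n k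
    have h2 : (n.choose (k+1) : K) * (k+1) = n.choose k * (n - k) := by
      rw [← Nat.cast_sub h]; exact_mod_cast congrArg (Nat.cast : ℕ → K) this
    rw [h2]; ring
  · rw [Nat.choose_eq_zero_of_lt h, Nat.choose_eq_zero_of_lt (by omega)]; simp

theorem WW_rec (k l : ℕ) : ((k:ℚ_[p])+1) * WW p (k+1) l =
    (l+1) * WW p k (l+1) + ((l:ℚ_[p]) - k) * WW p k l := by
  unfold WW
  rw [Finset.mul_sum, Finset.mul_sum, Finset.mul_sum, ← Finset.sum_add_distrib]
  apply Finset.sum_congr rfl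
  intro n _
  have h1 := choose_step (K := ℚ_[p]) n k
  have h2 := choose_step (K := ℚ_[p]) n l
  linear_combination (n.choose l : ℚ_[p]) * h1 - (n.choose k : ℚ_[p]) * h2

theorem MM_rec (K : Type*) [Field K] [CharZero K] (k l : ℕ) : ((k:K)+1) * MM K (k+1) l =
    (l+1) * MM K k (l+1) + ((l:K) - k) * MM K k l := by
  unfold MM
  rw [show k + 1 + l = k + l + 1 by ring, show k + (l + 1) = k + l + 1 by ring,
    Nat.factorial_succ (k+l+1), Nat.factorial_succ k, Nat.factorial_succ l, pow_succ]
  have h1 : (((k+l+1).factorial : ℕ) : K) ≠ 0 := by exact_mod_cast Nat.factorial_ne_zero _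
  have h2 : ((k:K)+l+1+1) ≠ 0 := by exact_mod_cast Nat.succ_ne_zero (k+l+1)
  push_cast
  field_simp
  ring

theorem err_rec (k l : ℕ) : ((k:ℚ_[p])+1) * err p (k+1) l =
    (l+1) * err p k (l+1) + ((l:ℚ_[p]) - k) * err p k l := by
  unfold err
  linear_combination WW_rec (p := p) k l - p * MM_rec ℚ_[p] k l

theorem err_ind (r N : ℕ) (h : ∀ l ≤ N, EE r (err p 0 l)) (k : ℕ) :
    k < p → ∀ l, k + l ≤ N → EE r (err p k l) := by
  induction k with
  | zero => intro _ l hl; exact h l (by omega)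
  | succ k ih =>
    intro hk l hl
    apply EE_cancel (n := k+1) (Nat.not_dvd_of_pos_of_lt (by omega) hk)
    push_cast
    rw [err_rec]
    apply EE_add
    · have := EE_nat (p := p) (l+1)
      push_cast at this
      exact EE_cmul this (ih (by omega) _ (by omega))
    · exact EE_cmul (EE_sub (EE_nat _) (EE_nat _)) (ih (by omega) _ (by omega))

theorem sum_choose (N l : ℕ) : ∑ n ∈ Finset.range N, n.choose l = N.choose (l+1) := by
  induction N with
  | zero => simp
  | succ N ih => rw [Finset.sum_range_succ, ih, Nat.choose_succ_succ]; ring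

theorem err_zero (l : ℕ) : ((l+1 : ℕ):ℚ_[p]) * err p 0 l =
    ((l+1 : ℕ):ℚ_[p]) * p.choose (l+1) - p * (-1)^l := by
  have h1 : WW p 0 l = p.choose (l+1) := by
    rw [WW, ← sum_choose]; push_cast; simp
  have h2 : ((l:ℚ_[p])+1) ≠ 0 := by exact_mod_cast Nat.succ_ne_zero l
  have h3 : ((l.factorial : ℕ) : ℚ_[p]) ≠ 0 := by exact_mod_cast Nat.factorial_ne_zero _
  rw [err, h1, MM, zero_add, Nat.factorial_succ]
  push_cast
  field_simp
  simp

theorem choose_pm (l : ℕ) : l < p → EE 1 (((p-1).choose l : ℚ_[p]) - (-1)^l) := by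
  induction l with
  | zero => intro _; simpa using EE_zero
  | succ l ih =>
    intro h
    have h1 : p.choose (l+1) = (p-1).choose l + (p-1).choose (l+1) := by
      obtain ⟨q, rfl⟩ : ∃ q, p = q + 1 := ⟨p - 1, by omega⟩
      rw [Nat.choose_succ_succ]; simp
    have h2 : EE 1 ((p.choose (l+1) : ℕ) : ℚ_[p]) :=
      EE_dvd ((Fact.out : p.Prime).dvd_choose_self (by omega) h)
    have := EE_sub h2 (ih (by omega))
    convert this using 1
    rw [h1]; push_cast; ring

theorem err_zero2 (l : ℕ) (h : l + 2 ≤ p) : EE 2 (err p 0 l) := by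
  apply EE_cancel (n := l+1) (Nat.not_dvd_of_pos_of_lt (by omega) (by omega))
  rw [err_zero]
  have h1 : p * (p-1).choose l = p.choose (l+1) * (l+1) := by
    have := Nat.add_one_mul_choose_eq (p-1) l
    rwa [Nat.sub_add_cancel (by omega)] at this
  have h2 := EE_mul (EE_p (p := p)) (choose_pm (p := p) l (by omega))
  convert h2 using 1
  have h3 : (p:ℚ_[p]) * (p-1).choose l = p.choose (l+1) * ((l+1 : ℕ):ℚ_[p]) := by exact_mod_cast congrArg (Nat.cast : ℕ → ℚ_[p]) h1
  linear_combination -h3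

theorem err_zero1 (hp : 3 < p) (l : ℕ) (h : l ≤ 2*p - 2) : EE 1 (err p 0 l) := by
  rcases lt_trichotomy (l+1) p with h1 | h1 | h1
  · exact EE_mono (by norm_num) (err_zero2 l (by omega))
  · have h2 := err_zero (p := p) l
    have hodd : Odd p := (Fact.out : p.Prime).odd_of_ne_two (by omega)
    have : Even l := by
      rw [← h1] at hodd
      rcases hodd with ⟨t, ht⟩
      exact ⟨t, by omega⟩
    rw [h1, this.neg_one_pow] at h2
    simp at h2
    rcases h2 with h2 | h2
    · exfalso; omega
    · rw [h2]; exact EE_zero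
  · apply EE_cancel (n := l+1)
    · intro hd
      rcases hd with ⟨t, ht⟩
      rcases t with _ | _ | t
      · omega
      · omega
      · have : p * (t+1+1) = p * t + 2 * p := by ring
        omega
    · rw [err_zero, Nat.choose_eq_zero_of_lt h1]
      have : EE 1 ((p:ℚ_[p]) * ((-1)^l)) := by
        have := EE_mul (EE_p (p := p)) (EE_int (p := p) ((-1)^l))
        simpa using this
      simpa using EE_neg this

theorem err_zero0 (hp : 3 < p) (l : ℕ) (h : l ≤ 2*p - 1) : EE 0 (err p 0 l) := by
  rcases Nat.lt_or_ge l (2*p-1) with h1 | h1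
  · exact EE_mono (by norm_num) (err_zero1 hp l (by omega))
  · have h2 := err_zero (p := p) l
    rw [show l + 1 = 2 * p by omega, Nat.choose_eq_zero_of_lt (by omega)] at h2
    have h3 : (p:ℚ_[p]) ≠ 0 := by exact_mod_cast (by omega : p ≠ 0)
    apply EE_cancel (n := 2) (Nat.not_dvd_of_pos_of_lt (by omega) (by omega))
    have h4 : ((2:ℕ):ℚ_[p]) * err p 0 l = - (-1)^l := by
      apply mul_left_cancel₀ h3
      push_cast at h2 ⊢
      linear_combination h2
    rw [h4]
    have := EE_neg (EE_int (p := p) ((-1)^l))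
    simpa using this

theorem main_cong (hp : 3 < p) (a : ℕ) (ha : 2*a + 3 ≤ p) (c d : ℕ → ℚ_[p])
    (hc : ∀ k < p, EE 0 (c k)) (hd : ∀ k < p+1, EE 0 (d k))
    (hc' : ∀ k < p, a < k → EE 1 (c k)) (hd' : ∀ k < p+1, a + 1 < k → EE 1 (d k)) :
    EE 2 (∑ n ∈ Finset.range p, (∑ k ∈ Finset.range p, c k * n.choose k) *
        (∑ l ∈ Finset.range (p+1), d l * n.choose l)
      - (p:ℚ_[p]) * ∑ k ∈ Finset.range p, ∑ l ∈ Finset.range (p+1), c k * d l * MM ℚ_[p] k l) := by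
  have h1 : ∑ n ∈ Finset.range p, (∑ k ∈ Finset.range p, c k * (n.choose k : ℚ_[p])) *
        (∑ l ∈ Finset.range (p+1), d l * (n.choose l : ℚ_[p])) =
      ∑ k ∈ Finset.range p, ∑ l ∈ Finset.range (p+1), c k * d l * WW p k l := by
    simp_rw [Finset.sum_mul_sum]
    rw [Finset.sum_comm]
    apply Finset.sum_congr rfl
    intro k _
    rw [Finset.sum_comm]
    apply Finset.sum_congr rfl
    intro l _
    rw [WW, Finset.mul_sum]
    apply Finset.sum_congr rfl
    intro n _
    ring
  have h2 : ∑ n ∈ Finset.range p, (∑ k ∈ Finset.range p, c k * (n.choose k : ℚ_[p])) *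
        (∑ l ∈ Finset.range (p+1), d l * (n.choose l : ℚ_[p]))
      - p * ∑ k ∈ Finset.range p, ∑ l ∈ Finset.range (p+1), c k * d l * MM ℚ_[p] k l =
      ∑ k ∈ Finset.range p, ∑ l ∈ Finset.range (p+1), c k * d l * err p k l := by
    rw [h1, Finset.mul_sum, ← Finset.sum_sub_distrib]
    apply Finset.sum_congr rfl
    intro k _
    rw [Finset.mul_sum, ← Finset.sum_sub_distrib]
    apply Finset.sum_congr rfl
    intro l _
    rw [err]; ring
  rw [h2]
  apply EE_sum
  intro k hk
  apply EE_sum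
  intro l hl
  rw [Finset.mem_range] at hk hl
  rcases Nat.lt_or_ge a k with h3 | h3 <;> rcases Nat.lt_or_ge (a+1) l with h4 | h4
  · exact EE_mul (EE_mul (hc' k hk h3) (hd' l hl h4))
      (err_ind 0 (2*p-1) (err_zero0 hp) k hk l (by omega))
  · exact EE_mul (EE_mul (hc' k hk h3) (hd l hl))
      (err_ind 1 (2*p-2) (err_zero1 hp) k hk l (by omega))
  · exact EE_mul (EE_mul (hc k hk) (hd' l hl h4))
      (err_ind 1 (2*p-2) (err_zero1 hp) k hk l (by omega))
  · have := EE_mul (EE_mul (hc k hk) (hd l hl))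
      (err_ind 2 (p-2) (fun l hl => err_zero2 l (by omega)) k hk l (by omega))
    simpa using this

theorem cc_dvd (a m k : ℕ) (_ha : 2*a + 3 ≤ p) (hm : m = a ∨ m + a + 1 = p) (hk : a < k) :
    p ∣ cc m k := by
  unfold cc
  rcases Nat.lt_or_ge m k with h | h
  · rw [Nat.choose_eq_zero_of_lt h]; simp
  · rcases hm with hm | hm
    · omega
    · apply Dvd.dvd.mul_right
      apply Dvd.dvd.mul_left
      rw [← Nat.choose_symm_add]
      exact Nat.Prime.dvd_choose_add (Fact.out) (by omega) (by omega) (by omega)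

theorem dd_sum (m n N : ℕ) (hn : n < N) :
    ∑ l ∈ Finset.range (N+1), (dd m l : ℚ_[p]) * n.choose l =
    n * ∑ k ∈ Finset.range N, (cc m k : ℚ_[p]) * n.choose k := by
  have h1 : ∀ l, (dd m l : ℚ_[p]) * n.choose l = l * cc m (l-1) * n.choose l + l * cc m l * n.choose l := by
    intro l; rw [dd]; push_cast; ring
  rw [Finset.sum_congr rfl (fun l _ => h1 l), Finset.sum_add_distrib, Finset.sum_range_succ', Finset.sum_range_succ,
    Nat.choose_eq_zero_of_lt hn, Finset.mul_sum]
  simp only [Nat.cast_zero, zero_mul, add_zero, mul_zero]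
  rw [← Finset.sum_add_distrib]
  apply Finset.sum_congr rfl
  intro k _
  have := choose_step (K := ℚ_[p]) n k
  rw [Nat.add_sub_cancel]; push_cast
  linear_combination (cc m k : ℚ_[p]) * this

/-- `t_n` at a natural number -/
noncomputable def tN (p : ℕ) [Fact p.Prime] (m n : ℕ) : ℚ_[p] :=
  ∑ k ∈ Finset.range p, (cc m k : ℚ_[p]) * n.choose k

theorem natA (hp : 3 < p) (a m : ℕ) (ha : 2*a + 3 ≤ p) (hm : m = a ∨ m + a + 1 = p) :
    EE 2 ((2*(m:ℚ_[p])+1) * ∑ n ∈ Finset.range p, (tN p m n)^2 - (p:ℚ_[p]) * (-1)^m) := by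
  have h := main_cong hp a ha (fun k => (cc m k : ℚ_[p])) (fun k => (cc m k : ℚ_[p]))
    (fun k _ => EE_nat _) (fun k _ => EE_nat _) (fun k _ h => EE_dvd (cc_dvd a m k ha hm h))
    (fun k _ h => EE_dvd (cc_dvd a m k ha hm (by omega)))
  simp only at h
  rw [sumA_field ℚ_[p] m p (by omega)] at h
  have h1 : ∑ n ∈ Finset.range p, (∑ k ∈ Finset.range p, (cc m k : ℚ_[p]) * n.choose k) *
        (∑ l ∈ Finset.range (p+1), (cc m l : ℚ_[p]) * n.choose l) = ∑ n ∈ Finset.range p, (tN p m n)^2 := by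
    apply Finset.sum_congr rfl
    intro n hn
    rw [Finset.sum_range_succ, Nat.choose_eq_zero_of_lt (Finset.mem_range.1 hn), pow_two, tN]
    simp
  rw [h1] at h
  have h2 := EE_cmul (EE_nat (p := p) (2*m+1)) h
  convert h2 using 1
  have h3 : (2*(m:ℚ_[p])+1) ≠ 0 := by exact_mod_cast Nat.succ_ne_zero (2*m)
  push_cast
  field_simp

theorem natB (hp : 3 < p) (a m : ℕ) (ha : 2*a + 3 ≤ p) (hm : m = a ∨ m + a + 1 = p) :
    EE 2 (∑ n ∈ Finset.range p, ((2*((m:ℚ_[p])*(m+1))+3) + 4 * n) * (tN p m n)^2 - p) := by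
  have h := main_cong hp a ha (fun k => (cc m k : ℚ_[p]))
    (fun l => ((2*((m:ℚ_[p])*(m+1))+3) * cc m l + 4 * dd m l))
    (fun k _ => EE_nat _) (fun k _ => by
      have := EE_nat (p := p) ((2*(m*(m+1))+3) * cc m k + 4 * dd m k)
      push_cast at this; exact this) (fun k _ h => EE_dvd (cc_dvd a m k ha hm h))
    (fun k _ h => by
      have h1 := cc_dvd a m k ha hm (by omega)
      have h2 := cc_dvd a m (k-1) ha hm (by omega)
      have h3 : p ∣ (2*(m*(m+1))+3) * cc m k + 4 * dd m k := by
        apply Dvd.dvd.add (h1.mul_left _)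
        exact ((h2.add h1).mul_left _).mul_left _
      have := EE_dvd h3
      push_cast at this; exact this)
  rw [sumB_field ℚ_[p] m p (by omega), mul_one] at h
  convert h using 2
  apply Finset.sum_congr rfl
  intro n hn
  have h1 := dd_sum (p := p) m n p (Finset.mem_range.1 hn)
  have h2 : ∑ l ∈ Finset.range (p+1), (cc m l : ℚ_[p]) * n.choose l = tN p m n := by
    rw [Finset.sum_range_succ, Nat.choose_eq_zero_of_lt (Finset.mem_range.1 hn), tN]
    simp
  have h3 : ∑ l ∈ Finset.range (p+1), ((2*((m:ℚ_[p])*(m+1))+3) * cc m l + 4 * dd m l) * n.choose l =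
     (2*((m:ℚ_[p])*(m+1))+3) * tN p m n + 4 * (n * tN p m n) := by
    rw [← h2, Finset.mul_sum, h2, tN, ← h1, Finset.mul_sum, ← Finset.sum_add_distrib]
    apply Finset.sum_congr rfl
    intro l _
    ring
  rw [h3, tN]
  ring

end part3

section part4
variable {p : ℕ} [Fact p.Prime]

/-- functions with a first-order Taylor expansion modulo `p^2` around `u0` -/
def TT (u0 : ℚ_[p]) (f : ℚ_[p] → ℚ_[p]) : Prop :=
  ∃ A D : ℚ_[p], EE 0 A ∧ EE 0 D ∧ ∀ h : ℚ_[p], EE 0 h → EE (p := p) 2 (f (u0 + p * h) - A - p * h * D)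

theorem EE_pp {x : ℚ_[p]} (hx : EE 0 x) : EE (p := p) 2 ((p:ℚ_[p]) * p * x) :=
  EE_mul (EE_mul EE_p EE_p) hx

theorem TT_const (u0 c : ℚ_[p]) (hc : EE 0 c) : TT u0 (fun _ => c) :=
  ⟨c, 0, hc, EE_zero, fun h _ => by simpa using EE_zero⟩

theorem TT_id (u0 : ℚ_[p]) (hc : EE 0 u0) : TT u0 (fun u => u) :=
  ⟨u0, 1, hc, by simpa using EE_nat (p := p) 1, fun h _ => by simpa using EE_zero⟩

theorem TT_add {u0 : ℚ_[p]} {f g : ℚ_[p] → ℚ_[p]} (hf : TT u0 f) (hg : TT u0 g) :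
    TT u0 (fun u => f u + g u) := by
  obtain ⟨A, D, hA, hD, hh⟩ := hf
  obtain ⟨A', D', hA', hD', hh'⟩ := hg
  refine ⟨A + A', D + D', EE_add hA hA', EE_add hD hD', fun h hr => ?_⟩
  convert EE_add (hh h hr) (hh' h hr) using 1
  ring

theorem TT_mul {u0 : ℚ_[p]} {f g : ℚ_[p] → ℚ_[p]} (hf : TT u0 f) (hg : TT u0 g) :
    TT u0 (fun u => f u * g u) := by
  obtain ⟨A, D, hA, hD, hh⟩ := hf
  obtain ⟨A', D', hA', hD', hh'⟩ := hg
  refine ⟨A * A', A * D' + D * A', EE_mul hA hA', EE_add (EE_mul hA hD') (EE_mul hD hA'), fun h hr => ?_⟩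
  have hp0 : EE (p := p) 0 (p:ℚ_[p]) := EE_nat p
  have h1 := hh h hr
  have h2 := hh' h hr
  have h3 : EE (p := p) 0 (A + p * h * D) := EE_add hA (EE_mul (EE_mul hp0 hr) hD)
  have h4 : EE (p := p) 0 (A' + p * h * D') := EE_add hA' (EE_mul (EE_mul hp0 hr) hD')
  have h5 := EE_add (EE_add (EE_add (EE_cmul h3 h2) (EE_cmul h4 h1))
    (EE_cmul (EE_mono (by norm_num : 0 ≤ 2) h1) h2))
    (EE_pp (EE_mul (EE_mul hr hD) (EE_mul hr hD')))
  convert h5 using 1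
  ring

theorem TT_sum {u0 : ℚ_[p]} {ι : Type*} (s : Finset ι) (f : ι → ℚ_[p] → ℚ_[p])
    (h : ∀ i ∈ s, TT u0 (f i)) : TT u0 (fun u => ∑ i ∈ s, f i u) := by
  classical
  induction s using Finset.induction_on with
  | empty => simpa using TT_const u0 0 EE_zero
  | insert a s ha ih =>
    simp only [Finset.sum_insert ha]
    exact TT_add (h _ (Finset.mem_insert_self _ _)) (ih fun i hi => h i (Finset.mem_insert_of_mem hi))

theorem TT_prod {u0 : ℚ_[p]} {ι : Type*} (s : Finset ι) (f : ι → ℚ_[p] → ℚ_[p])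
    (h : ∀ i ∈ s, TT u0 (f i)) : TT u0 (fun u => ∏ i ∈ s, f i u) := by
  classical
  induction s using Finset.induction_on with
  | empty => simpa using TT_const u0 1 (by simpa using EE_nat (p := p) 1)
  | insert a s ha ih =>
    simp only [Finset.prod_insert ha]
    exact TT_mul (h _ (Finset.mem_insert_self _ _)) (ih fun i hi => h i (Finset.mem_insert_of_mem hi))

noncomputable def cU (k : ℕ) (u : ℚ_[p]) : ℚ_[p] :=
  (2^k / (k.factorial : ℚ_[p])^2) * ∏ j ∈ Finset.range k, (u + -((j:ℚ_[p])*(j+1)))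

noncomputable def tU (n : ℕ) (u : ℚ_[p]) : ℚ_[p] :=
  ∑ k ∈ Finset.range p, cU k u * n.choose k

theorem cU_TT (u0 : ℚ_[p]) (hu : EE 0 u0) (k : ℕ) (hk : k < p) : TT u0 (cU k) := by
  unfold cU
  apply TT_mul
  · apply TT_const
    have hf : ¬ p ∣ k.factorial := by
      rw [(Fact.out : p.Prime).dvd_factorial]; omega
    apply EE_cancel hf
    apply EE_cancel hf
    have h0 : (k.factorial : ℚ_[p]) ≠ 0 := by exact_mod_cast Nat.factorial_ne_zero _
    have : (k.factorial : ℚ_[p]) * (k.factorial * (2^k / (k.factorial : ℚ_[p])^2)) = ((2^k : ℕ) : ℚ_[p]) := by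
      push_cast; field_simp
    rw [this]; exact EE_nat _
  · apply TT_prod
    intro j _
    apply TT_add (TT_id u0 hu)
    apply TT_const
    have := EE_neg (EE_nat (p := p) (j*(j+1)))
    push_cast at this; exact this

theorem tU_TT (u0 : ℚ_[p]) (hu : EE 0 u0) (n : ℕ) : TT u0 (tU n) := by
  unfold tU
  apply TT_sum
  intro k hk
  exact TT_mul (cU_TT u0 hu k (Finset.mem_range.1 hk)) (TT_const _ _ (EE_nat _))

theorem S0_TT (u0 : ℚ_[p]) (hu : EE 0 u0) : TT u0 (fun u => ∑ n ∈ Finset.range p, (tU n u)^2) := by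
  apply TT_sum
  intro n _
  simp only [pow_two]
  exact TT_mul (tU_TT u0 hu n) (tU_TT u0 hu n)

theorem F2_TT (u0 : ℚ_[p]) (hu : EE 0 u0) :
    TT u0 (fun u => ∑ n ∈ Finset.range p, ((2*u+3)+4*(n:ℚ_[p])) * (tU n u)^2) := by
  apply TT_sum
  intro n _
  simp only [pow_two]
  apply TT_mul
  · apply TT_add
    · apply TT_add
      · exact TT_mul (TT_const _ _ (by simpa using EE_nat (p := p) 2)) (TT_id u0 hu)
      · exact TT_const _ _ (by simpa using EE_nat (p := p) 3)
    · exact TT_const _ _ (by simpa using EE_nat (p := p) (4 * n))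
  · exact TT_mul (tU_TT u0 hu n) (tU_TT u0 hu n)

theorem cU_nat (m k : ℕ) : cU (p := p) k ((m:ℚ_[p])*(m+1)) = cc m k := by
  induction k with
  | zero => simp [cU, cc]
  | succ k ih =>
    have h1 := choose_step (K := ℚ_[p]) m k
    have h2 : (((m+(k+1)).choose (k+1) : ℚ_[p])) * (k+1) = (m+k+1) * (m+k).choose k := by
      have := Nat.add_one_mul_choose_eq (m+k) k
      exact_mod_cast congrArg (Nat.cast : ℕ → ℚ_[p]) this.symm
    have h3 : ((k:ℚ_[p])+1) ≠ 0 := by exact_mod_cast Nat.succ_ne_zero k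
    have h0 : (k.factorial : ℚ_[p]) ≠ 0 := by exact_mod_cast Nat.factorial_ne_zero _
    have h4 : ((k:ℚ_[p])+1)^2 * cU (p := p) (k+1) ((m:ℚ_[p])*(m+1)) =
        2 * ((m:ℚ_[p])*(m+1) - k*(k+1)) * cU (p := p) k ((m:ℚ_[p])*(m+1)) := by
      unfold cU
      rw [Finset.prod_range_succ, Nat.factorial_succ]
      push_cast
      field_simp
      ring
    apply mul_left_cancel₀ (pow_ne_zero 2 h3)
    rw [h4, ih]
    unfold cc
    push_cast
    have h5 : (m.choose (k+1) : ℚ_[p]) * (k+1) = m.choose k * (m - k) := by linear_combination h1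
    linear_combination (-(2:ℚ_[p])^(k+1) * (((m+(k+1)).choose (k+1) : ℚ_[p])) * (k+1)) * h5
      - (2:ℚ_[p])^(k+1) * (m.choose k * (m - k)) * h2

theorem tU_nat (m n : ℕ) : tU (p := p) n ((m:ℚ_[p])*(m+1)) = tN p m n := by
  unfold tU tN
  simp only [cU_nat]

theorem gb_eq (x : ℚ_[p]) (k : ℕ) :
    gbinom x k * gbinom (x + (k:ℚ_[p])) k * 2^k = cU k (x*(x+1)) := by
  unfold gbinom cU
  have h1 : ∏ i ∈ Finset.range k, (x + (k:ℚ_[p]) - i) = ∏ j ∈ Finset.range k, (x + j + 1) := by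
    rw [← Finset.prod_range_reflect]
    apply Finset.prod_congr rfl
    intro j hj
    have hj := Finset.mem_range.1 hj
    have : ((k - 1 - j : ℕ) : ℚ_[p]) = k - 1 - j := by
      rw [Nat.cast_sub (by omega), Nat.cast_sub (by omega)]; simp
    rw [this]; ring
  have h2 : ∏ j ∈ Finset.range k, (x*(x+1) + -((j:ℚ_[p])*(j+1))) =
      (∏ i ∈ Finset.range k, (x - i)) * ∏ j ∈ Finset.range k, (x + j + 1) := by
    rw [← Finset.prod_mul_distrib]
    apply Finset.prod_congr rfl
    intro j _
    ring
  rw [h1, h2]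
  ring

theorem tseq_eq_s19 (x : ℚ_[p]) (n : ℕ) (hn : n < p) : tseq x n = tU n (x*(x+1)) := by
  unfold tseq tU
  have h1 : ∀ k, (n.choose k : ℚ_[p]) * gbinom x k * gbinom (x + (k:ℚ_[p])) k * 2^k
      = cU k (x*(x+1)) * (n.choose k : ℚ_[p]) := by
    intro k; rw [← gb_eq]; ring
  simp only [h1]
  apply Finset.sum_subset
  · intro k hk; rw [Finset.mem_range] at *; omega
  · intro k _ hk
    rw [Finset.mem_range] at hk
    rw [Nat.choose_eq_zero_of_lt (by omega)]; simp

theorem F2_cong (hp : 3 < p) (a : ℕ) (ha : 2*a+3 ≤ p) (h : ℚ_[p]) (hh : EE 0 h) (u : ℚ_[p])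
    (hu : u = (a:ℚ_[p])*(a+1) + p * h) :
    EE (p := p) 2 (∑ n ∈ Finset.range p, ((2*u+3)+4*(n:ℚ_[p])) * (tU n u)^2 - p) := by
  have hu0 : EE (p := p) 0 ((a:ℚ_[p])*(a+1)) := by
    have := EE_nat (p := p) (a*(a+1)); push_cast at this; exact this
  obtain ⟨A, D, hA, hD, hT⟩ := F2_TT _ hu0
  obtain ⟨b, hb⟩ : ∃ b, b + a + 1 = p := ⟨p - a - 1, by omega⟩
  have hbq : (b:ℚ_[p]) + a + 1 = p := by exact_mod_cast congrArg (Nat.cast : ℕ → ℚ_[p]) hb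
  have n1 := natB hp a a ha (Or.inl rfl)
  have n2 := natB hp a b ha (Or.inr hb)
  simp only [← tU_nat] at n1 n2
  have t1 := hT 0 EE_zero
  have t2 := hT ((p:ℚ_[p]) - (2*a+1)) (by
    have := EE_sub (EE_nat (p := p) p) (EE_nat (p := p) (2*a+1)); push_cast at this; exact this)
  have t3 := hT h hh
  rw [← hu] at t3
  rw [mul_zero, add_zero] at t1
  have hbb : (a:ℚ_[p])*(a+1) + p * ((p:ℚ_[p]) - (2*a+1)) = (b:ℚ_[p])*(b+1) := by
    rw [← hbq]; ring
  rw [hbb] at t2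
  simp only at t1 t2 t3
  have hAp : EE (p := p) 2 (A - p) := by
    convert EE_sub n1 t1 using 1; ring
  have hpD : EE (p := p) 2 ((p:ℚ_[p]) * D) := by
    apply EE_cancel (n := 2*a+1) (Nat.not_dvd_of_pos_of_lt (by omega) (by omega))
    convert EE_add (EE_add (EE_sub t2 n2) hAp) (EE_pp hD) using 1
    push_cast; ring
  convert EE_add (EE_add t3 hAp) (EE_cmul hh hpD) using 1
  ring

theorem S0_cong (hp : 3 < p) (a : ℕ) (ha : 2*a+3 ≤ p) (s : ℤ) (hs : s ^ 2 = 1) (hs' : (-1)^a = s)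
    (haw : 3 * (2 * (a:ℤ) + 1) = 2 * p + s) (u : ℚ_[p]) (hu : u = -2/9) :
    EE (p := p) 2 (∑ n ∈ Finset.range p, (tU n u)^2 - p) := by
  have hp2 := (Fact.out : p.Prime).odd_of_ne_two (by omega)
  have hu0 : EE (p := p) 0 ((a:ℚ_[p])*(a+1)) := by
    have := EE_nat (p := p) (a*(a+1)); push_cast at this; exact this
  have h9 : ¬ p ∣ 9 := by
    intro h
    have : p ∣ 3 := (Fact.out : p.Prime).dvd_of_dvd_pow (n := 2) (by simpa using h)
    exact Nat.not_dvd_of_pos_of_lt (by omega) hp this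
  obtain ⟨A, D, hA, hD, hT⟩ := S0_TT _ hu0
  obtain ⟨b, hb⟩ : ∃ b, b + a + 1 = p := ⟨p - a - 1, by omega⟩
  have hbq : (b:ℚ_[p]) + a + 1 = p := by exact_mod_cast congrArg (Nat.cast : ℕ → ℚ_[p]) hb
  have n1 := natA hp a a ha (Or.inl rfl)
  have n2 := natA hp a b ha (Or.inr hb)
  simp only [← tU_nat] at n1 n2
  have hsq : ((s:ℚ_[p]))^2 = 1 := by exact_mod_cast congrArg (Int.cast : ℤ → ℚ_[p]) hs
  have hsa : (-1:ℚ_[p])^a = s := by exact_mod_cast congrArg (Int.cast : ℤ → ℚ_[p]) hs'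
  have hsb : (-1:ℚ_[p])^b = s := by
    rw [← hsa]
    have hev : Even (b + a) := by
      rcases hp2 with ⟨t, ht⟩
      exact ⟨t, by omega⟩
    have h1 : (-1:ℚ_[p])^b * (-1)^a = 1 := by rw [← pow_add, hev.neg_one_pow]
    have h2 : (-1:ℚ_[p])^a * (-1)^a = 1 := by rw [← mul_pow]; simp
    linear_combination (-1:ℚ_[p])^a * h1 - (-1:ℚ_[p])^b * h2
  have hw : 3 * (2 * (a:ℚ_[p]) + 1) = 2 * p + s := by exact_mod_cast congrArg (Int.cast : ℤ → ℚ_[p]) haw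
  rw [hsa] at n1
  rw [hsb] at n2
  obtain ⟨h, hh9⟩ : ∃ h : ℚ_[p], 9 * h = -(p + s) := ⟨-(p+s)/9, by ring⟩
  have hI : EE (p := p) 0 (s:ℚ_[p]) := EE_int s
  have hP : EE (p := p) 0 (p:ℚ_[p]) := EE_nat p
  have hh : EE 0 h := by
    apply EE_cancel h9
    push_cast
    rw [hh9]
    exact EE_neg (EE_add hP hI)
  have hu' : u = (a:ℚ_[p])*(a+1) + p * h := by
    have h36 : (36:ℚ_[p]) ≠ 0 := by norm_num
    apply mul_left_cancel₀ h36
    rw [hu]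
    linear_combination (-(3 * (2 * (a:ℚ_[p]) + 1)) - (2*p+s)) * hw - 4 * p * hh9 - hsq
  have t1 := hT 0 EE_zero
  have hN : EE (p := p) 0 ((p:ℚ_[p]) - (2*a+1)) := by
    have := EE_sub (EE_nat (p := p) p) (EE_nat (p := p) (2*a+1)); push_cast at this; exact this
  have t2 := hT ((p:ℚ_[p]) - (2*a+1)) hN
  have t3 := hT h hh
  rw [← hu'] at t3
  rw [mul_zero, add_zero] at t1
  have hbb : (a:ℚ_[p])*(a+1) + p * ((p:ℚ_[p]) - (2*a+1)) = (b:ℚ_[p])*(b+1) := by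
    rw [← hbq]; ring
  rw [hbb] at t2
  simp only at t1 t2 t3
  have hW : EE (p := p) 0 (2 * (a:ℚ_[p]) + 1) := by
    have := EE_nat (p := p) (2*a+1); push_cast at this; exact this
  have hW' : EE (p := p) 0 (2 * (b:ℚ_[p]) + 1) := by
    have := EE_nat (p := p) (2*b+1); push_cast at this; exact this
  have h2 : EE (p := p) 0 (2:ℚ_[p]) := by simpa using EE_nat (p := p) 2
  have h3 : EE (p := p) 0 (3:ℚ_[p]) := by simpa using EE_nat (p := p) 3
  have h4 : EE (p := p) 0 (4:ℚ_[p]) := by simpa using EE_nat (p := p) 4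
  have h9' : EE (p := p) 0 (9:ℚ_[p]) := by simpa using EE_nat (p := p) 9
  have h18 : EE (p := p) 0 (18:ℚ_[p]) := by simpa using EE_nat (p := p) 18
  set w : ℚ_[p] := 2 * (a:ℚ_[p]) + 1 with hwdef
  set v : ℚ_[p] := 2 * (b:ℚ_[p]) + 1 with hvdef
  have hv : v = 2 * p - w := by rw [hvdef, hwdef, ← hbq]; ring
  have e1 : EE (p := p) 2 (w * A - p * s) := by
    convert EE_sub n1 (EE_cmul hW t1) using 1; ring
  have e2 : EE (p := p) 2 (v * (A + p * (p - w) * D) - p * s) := by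
    convert EE_sub n2 (EE_cmul hW' t2) using 1; ring
  have hA1 : EE 1 A := by
    apply EE_cancel (n := 2*a+1) (Nat.not_dvd_of_pos_of_lt (by omega) (by omega))
    have := EE_add (EE_mono (by norm_num : 1 ≤ 2) e1) (EE_mul EE_p hI)
    convert this using 1
    push_cast; ring
  have hpA : EE (p := p) 2 ((p:ℚ_[p]) * A) := EE_mul EE_p hA1
  have a3 : EE (p := p) 2 (A - 3 * p) := by
    convert EE_cmul hI (EE_sub (EE_cmul h3 e1) (EE_cmul h2 hpA)) using 1
    linear_combination (-(s:ℚ_[p]) * A) * hw + (3 * p - A) * hsq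
  have d18 : EE (p := p) 2 ((p:ℚ_[p]) * D - 18 * p * s) := by
    have hz : EE (p := p) 0 (-18 * ((p:ℚ_[p]) - w) * D + 9 * w * D - 4 * s * D - 4 * p * D) :=
      EE_sub (EE_sub (EE_add (EE_mul (EE_mul (EE_neg h18) hN) hD) (EE_mul (EE_mul h9' hW) hD))
        (EE_mul (EE_mul h4 hI) hD)) (EE_mul (EE_mul h4 hP) hD)
    convert EE_add (EE_sub (EE_add (EE_cmul h9' e2) (EE_cmul h9' e1)) (EE_cmul h18 hpA)) (EE_pp hz) using 1
    rw [hv]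
    linear_combination (-(p:ℚ_[p]) * D * (3 * w + 2 * p + s)) * hw - (p:ℚ_[p]) * D * hsq
  apply EE_cancel h9
  have hz : EE (p := p) 0 (-D) := EE_neg hD
  convert EE_add (EE_sub (EE_add (EE_cmul h9' t3) (EE_cmul h9' a3)) (EE_cmul hI d18)) (EE_pp hz) using 1
  push_cast
  linear_combination (p:ℚ_[p]) * D * hh9 - 18 * p * hsq

end part4

theorem not_dvd_of {p : ℕ} [Fact p.Prime] (hp : 3 < p) : ¬ p ∣ 36 := by
  intro h
  have h6 : p ∣ 6 := (Fact.out : p.Prime).dvd_of_dvd_pow (n := 2) (by simpa using h)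
  have h23 : p ∣ 2 * 3 := by simpa using h6
  rcases (Fact.out : p.Prime).dvd_mul.1 h23 with h | h
  · exact Nat.not_dvd_of_pos_of_lt (by omega) (by omega) h
  · exact Nat.not_dvd_of_pos_of_lt (by omega) hp h

theorem EE_div36 {p : ℕ} [Fact p.Prime] (hp : 3 < p) (n : ℤ) : EE (p := p) 0 ((n : ℚ_[p]) / 36) := by
  apply EE_cancel (not_dvd_of hp)
  have : ((36 : ℕ) : ℚ_[p]) * ((n : ℚ_[p]) / 36) = n := by push_cast; ring
  rw [this]; exact EE_int n

theorem mod6 {p : ℕ} [Fact p.Prime] (hp : 3 < p) : p % 6 = 1 ∨ p % 6 = 5 := by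
  have h2 : ¬ 2 ∣ p := fun h => by
    have := (Nat.prime_dvd_prime_iff_eq Nat.prime_two (Fact.out : p.Prime)).1 h; omega
  have h3 : ¬ 3 ∣ p := fun h => by
    have := (Nat.prime_dvd_prime_iff_eq Nat.prime_three (Fact.out : p.Prime)).1 h; omega
  omega

theorem partA {p : ℕ} [Fact p.Prime] (hp : 3 < p) :
    EE (p := p) 2 (∑ n ∈ Finset.range p, (tU n (-2/9 : ℚ_[p]))^2 - (p:ℚ_[p])) ∧
    EE (p := p) 2 (∑ n ∈ Finset.range p, ((2*(-2/9 : ℚ_[p])+3)+4*(n:ℚ_[p])) * (tU n (-2/9 : ℚ_[p]))^2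
      - (p:ℚ_[p])) := by
  rcases mod6 hp with h | h
  · obtain ⟨t, ht⟩ : ∃ t, p = 6 * t + 1 := ⟨p / 6, by omega⟩
    have hq : (p:ℚ_[p]) = 6 * t + 1 := by exact_mod_cast congrArg (Nat.cast : ℕ → ℚ_[p]) ht
    refine ⟨S0_cong hp (2*t) (by omega) 1 (by norm_num) (by simp [pow_mul]) (by push_cast; omega) _ rfl,
      F2_cong hp (2*t) (by omega) (((-4*(p+1) : ℤ) : ℚ_[p])/36) (EE_div36 hp _) _ ?_⟩
    push_cast
    rw [hq]; ring
  · obtain ⟨t, ht⟩ : ∃ t, p = 6 * t + 5 := ⟨p / 6, by omega⟩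
    have hq : (p:ℚ_[p]) = 6 * t + 5 := by exact_mod_cast congrArg (Nat.cast : ℕ → ℚ_[p]) ht
    refine ⟨S0_cong hp (2*t+1) (by omega) (-1) (by norm_num) (by simp [pow_succ, pow_mul])
      (by push_cast; omega) _ rfl,
      F2_cong hp (2*t+1) (by omega) (((-4*(p-1) : ℤ) : ℚ_[p])/36) (EE_div36 hp _) _ ?_⟩
    push_cast
    rw [hq]; ring

theorem partB {p : ℕ} [Fact p.Prime] (hp : 3 < p) :
    EE (p := p) 2 (∑ n ∈ Finset.range p, ((2*(-5/36 : ℚ_[p])+3)+4*(n:ℚ_[p])) * (tU n (-5/36 : ℚ_[p]))^2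
      - (p:ℚ_[p])) := by
  rcases mod6 hp with h | h
  · obtain ⟨t, ht⟩ : ∃ t, p = 6 * t + 1 := ⟨p / 6, by omega⟩
    have hq : (p:ℚ_[p]) = 6 * t + 1 := by exact_mod_cast congrArg (Nat.cast : ℕ → ℚ_[p]) ht
    refine F2_cong hp t (by omega) (((-(p+4) : ℤ) : ℚ_[p])/36) (EE_div36 hp _) _ ?_
    push_cast
    rw [hq]; ring
  · obtain ⟨t, ht⟩ : ∃ t, p = 6 * t + 5 := ⟨p / 6, by omega⟩
    have hq : (p:ℚ_[p]) = 6 * t + 5 := by exact_mod_cast congrArg (Nat.cast : ℕ → ℚ_[p]) ht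
    refine F2_cong hp t (by omega) (((-(p-4) : ℤ) : ℚ_[p])/36) (EE_div36 hp _) _ ?_
    push_cast
    rw [hq]; ring

theorem stmt_19 (p : ℕ) [Fact p.Prime] (hp : 3 < p) :
    ‖(∑ n ∈ Finset.range p, (18*(n : ℚ_[p]) + 7) * (tseq (-1/3 : ℚ_[p]) n)^2)‖
      ≤ (p : ℝ) ^ (-2 : ℤ) ∧
    ‖(∑ n ∈ Finset.range p, (72*(n : ℚ_[p]) + 49) * (tseq (-1/6 : ℚ_[p]) n)^2) - 18*(p : ℚ_[p])‖
      ≤ (p : ℝ) ^ (-2 : ℤ) := by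
  have hu1 : (-1/3 : ℚ_[p]) * (-1/3 + 1) = -2/9 := by norm_num
  have hu2 : (-1/6 : ℚ_[p]) * (-1/6 + 1) = -5/36 := by norm_num
  have r1 : ∑ n ∈ Finset.range p, (18*(n : ℚ_[p]) + 7) * (tseq (-1/3 : ℚ_[p]) n)^2 =
      ∑ n ∈ Finset.range p, (18*(n : ℚ_[p]) + 7) * (tU n (-2/9 : ℚ_[p]))^2 :=
    Finset.sum_congr rfl fun n hn => by rw [tseq_eq_s19 _ n (Finset.mem_range.1 hn), hu1]
  have r2 : ∑ n ∈ Finset.range p, (72*(n : ℚ_[p]) + 49) * (tseq (-1/6 : ℚ_[p]) n)^2 =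
      ∑ n ∈ Finset.range p, (72*(n : ℚ_[p]) + 49) * (tU n (-5/36 : ℚ_[p]))^2 :=
    Finset.sum_congr rfl fun n hn => by rw [tseq_eq_s19 _ n (Finset.mem_range.1 hn), hu2]
  rw [r1, r2]
  have h9 : EE (p := p) 0 (9 : ℚ_[p]) := by simpa using EE_nat (p := p) 9
  have h18 : EE (p := p) 0 (18 : ℚ_[p]) := by simpa using EE_nat (p := p) 18
  constructor
  · change EE (p := p) 2 _
    obtain ⟨h1, h2⟩ := partA hp
    apply EE_cancel (n := 2) (Nat.not_dvd_of_pos_of_lt (by omega) (by omega))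
    convert EE_sub (EE_cmul h9 h2) (EE_cmul h9 h1) using 1
    rw [← mul_sub, sub_sub_sub_cancel_right, ← Finset.sum_sub_distrib, Finset.mul_sum, Finset.mul_sum]
    apply Finset.sum_congr rfl
    intro n _
    push_cast
    ring
  · change EE (p := p) 2 _
    convert EE_cmul h18 (partB hp) using 1
    rw [mul_sub, Finset.mul_sum]
    congr 1
    apply Finset.sum_congr rfl
    intro n _
    ring
end
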